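/- arXiv:2603.21267 — 3 statements merged into one kernel-verified Lean document; each statement's English description precedes it below -/
import Mathlib

section
/- Let (C,p,Q,𝒬) be a generalized Brascamp–Lieb datum with 𝒬 symmetric positive semidefinite and BL(C,p,Q,𝒬) < +∞. If the tuples f = (f_i)_{i=1}^m and g = (g_i)_{i=1}^m are both extremizers for (C,p,Q,𝒬), then the tuple (Conv(f_i,g_i))_{i=1}^m, where Conv(u,v)(x) = 2^{k/2} ∫_{ℝ^k} u(√2·x − y) v(y) dy for u,v on ℝ^k, is also an extremizer for (C,p,Q,𝒬); in particular each Conv(f_i,g_i) is more log-convex than g_{Q_i}. -/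
open MeasureTheory Matrix
open scoped ENNReal

noncomputable section

/-- The centered Gaussian function attached to a matrix `Q` : `g_Q(x) = exp(-π⟨Qx,x⟩)`. -/
def gaussFn {k : ℕ} (Q : Matrix (Fin k) (Fin k) ℝ) (x : Fin k → ℝ) : ℝ :=
  Real.exp (-Real.pi * (Q.mulVec x ⬝ᵥ x))

/-- A nonnegative log-convex function. -/
def LogConvexFun {k : ℕ} (h : (Fin k → ℝ) → ℝ) : Prop :=
  (∀ x, 0 ≤ h x) ∧
    ∀ x y : Fin k → ℝ, ∀ a b : ℝ, 0 ≤ a → 0 ≤ b → a + b = 1 →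
      h (a • x + b • y) ≤ h x ^ a * h y ^ b

/-- `f` is more log-convex than `g_Q`, i.e. `f = g_Q · h` with `h` log-convex. -/
def MoreLogConvex {k : ℕ} (f : (Fin k → ℝ) → ℝ) (Q : Matrix (Fin k) (Fin k) ℝ) : Prop :=
  ∃ h : (Fin k → ℝ) → ℝ, LogConvexFun h ∧ f = fun x => gaussFn Q x * h x

/-- The generalized regularized Brascamp–Lieb constant of a datum `(C, p, Q, 𝒬)`. -/
def BLconstQ {n m : ℕ} {ni : Fin m → ℕ} (C : ∀ i, Matrix (Fin (ni i)) (Fin n) ℝ)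
    (p : Fin m → ℝ) (Q : ∀ i, Matrix (Fin (ni i)) (Fin (ni i)) ℝ)
    (𝒬 : Matrix (Fin n) (Fin n) ℝ) : ℝ≥0∞ :=
  ⨆ (B : ∀ i, Matrix (Fin (ni i)) (Fin (ni i)) ℝ)
    (_ : ∀ i, (B i).PosDef ∧ (Q i - B i).PosSemidef),
    ((∏ i, ENNReal.ofReal ((B i).det) ^ p i) /
        ENNReal.ofReal ((𝒬 + ∑ i, p i • ((C i)ᵀ * B i * C i)).det)) ^ ((2 : ℝ)⁻¹)

/-- An extremizer for the generalized regularized Brascamp–Lieb datum `(C, p, Q, 𝒬)`. -/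
def IsExtremizer {n m : ℕ} {ni : Fin m → ℕ} (C : ∀ i, Matrix (Fin (ni i)) (Fin n) ℝ)
    (p : Fin m → ℝ) (Q : ∀ i, Matrix (Fin (ni i)) (Fin (ni i)) ℝ)
    (𝒬 : Matrix (Fin n) (Fin n) ℝ) (f : ∀ i, (Fin (ni i) → ℝ) → ℝ) : Prop :=
  (∀ i, Integrable (f i)) ∧ (∀ i, ¬ (f i =ᵐ[volume] 0)) ∧
    (∀ i, MoreLogConvex (f i) (Q i)) ∧
    (∫⁻ x : Fin n → ℝ, ENNReal.ofReal
        (Real.exp (-Real.pi * (𝒬.mulVec x ⬝ᵥ x)) * ∏ i, f i ((C i).mulVec x) ^ p i)) =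
      BLconstQ C p Q 𝒬 * ∏ i, ENNReal.ofReal (∫ y, f i y) ^ p i

/-- The rescaled convolution `Conv(u,v)(x) = 2^{k/2} (u ∗ v)(√2 x)`. -/
def Conv {k : ℕ} (u v : (Fin k → ℝ) → ℝ) (x : Fin k → ℝ) : ℝ :=
  (2 : ℝ) ^ ((k : ℝ) / 2) * ∫ y, u (Real.sqrt 2 • x - y) * v y

/-!
The rotation `(x, z) ↦ ((x + z)/√2, (x - z)/√2)` preserves Lebesgue measure and Gaussian weights.
Write `J(f) = ∫ g_𝒬(x) ∏ᵢ fᵢ(Cᵢx)^{pᵢ} dx` and, for fixed `x`, let `u_x` be the tuple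
`z ↦ fᵢ((Cᵢx + z)/√2) gᵢ((Cᵢx - z)/√2)`, which is again more log-convex than `g_Q` and whose
integrals are `Conv(fᵢ, gᵢ)(Cᵢx)`. Rotating the variables in `J(f) J(g)` gives
`∫ g_𝒬(x) J(u_x) dx`, so if `J(u) ≤ K ∏ᵢ (∫ uᵢ)^{pᵢ}` for all admissible `u`, then
`J(f) J(g) ≤ K J(Conv(f, g))`. When `f` and `g` attain `K`, so does `Conv(f, g)`.

It remains to identify `K` with the Gaussian constant. If `𝒬` is positive definite, convexity gives
enough compactness for optimal tuples to exist. The equality case of the argument above says that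
each `u_x` is optimal when `f` and `g` are. Taking `f = g`, these are even; iterating the map
`u ↦ u(z/√2)²` on an even optimal tuple shows that it is largest at the origin, so optimal tuples
are log-concave. Their logarithms, being also semiconvex, are `C^{1,1}`, hence twice differentiable
almost everywhere by Rademacher's theorem, and at such a point the same iteration converges to an
optimal Gaussian tuple. For positive semidefinite `𝒬`, replace `𝒬` by `𝒬 + ε` and let `ε → 0`.
-/

open Filter Topology

section QuadForm

variable {ι : Type*} [Fintype ι]

/-- The quadratic form `⟨Qx, x⟩` of a square matrix. -/
def quadForm (Q : Matrix ι ι ℝ) (x : ι → ℝ) : ℝ := Q *ᵥ x ⬝ᵥ x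

@[fun_prop]
theorem continuous_quadForm (Q : Matrix ι ι ℝ) : Continuous (quadForm Q) := by
  unfold quadForm
  fun_prop

theorem quadForm_smul (Q : Matrix ι ι ℝ) (c : ℝ) (x : ι → ℝ) :
    quadForm Q (c • x) = c ^ 2 * quadForm Q x := by
  simp only [quadForm, mulVec_smul, smul_dotProduct, dotProduct_smul, smul_eq_mul]
  ring

theorem quadForm_add_add_quadForm_sub (Q : Matrix ι ι ℝ) (x z : ι → ℝ) :
    quadForm Q (x + z) + quadForm Q (x - z) = 2 * quadForm Q x + 2 * quadForm Q z := by
  simp only [quadForm, mulVec_add, mulVec_sub, add_dotProduct, sub_dotProduct, dotProduct_add,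
    dotProduct_sub]
  ring

theorem sub_quadForm (Q B : Matrix ι ι ℝ) (x : ι → ℝ) :
    quadForm (Q - B) x = quadForm Q x - quadForm B x := by
  simp only [quadForm, sub_mulVec, sub_dotProduct]

theorem quadForm_add_smul_one [DecidableEq ι] (A : Matrix ι ι ℝ) (ε : ℝ) (x : ι → ℝ) :
    quadForm (A + ε • 1) x = quadForm A x + ε * (x ⬝ᵥ x) := by
  simp only [quadForm, add_mulVec, smul_mulVec, one_mulVec, add_dotProduct, smul_dotProduct,
    smul_eq_mul]

theorem quadForm_nonneg {Q : Matrix ι ι ℝ} (hQ : Q.PosSemidef) (x : ι → ℝ) :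
    0 ≤ quadForm Q x := by
  simpa only [quadForm, star_trivial, dotProduct_comm] using hQ.dotProduct_mulVec_nonneg x

theorem posSemidef_of_quadForm_nonneg {A : Matrix ι ι ℝ} (hA : A.IsSymm)
    (h : ∀ x, 0 ≤ quadForm A x) : A.PosSemidef :=
  .of_dotProduct_mulVec_nonneg (by rwa [IsHermitian, conjTranspose_eq_transpose_of_trivial])
    fun x => by simpa only [quadForm, star_trivial, dotProduct_comm] using h x

theorem convexOn_quadForm {A : Matrix ι ι ℝ} (hA : A.PosSemidef) :
    ConvexOn ℝ Set.univ (quadForm A) := by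
  refine ⟨convex_univ, fun x _ y _ a b ha hb hab => ?_⟩
  have h : a * quadForm A x + b * quadForm A y - quadForm A (a • x + b • y) =
      a * b * quadForm A (x - y) := by
    obtain rfl : b = 1 - a := by linarith
    simp only [quadForm, mulVec_add, mulVec_sub, mulVec_smul, add_dotProduct, sub_dotProduct,
      dotProduct_add, dotProduct_sub, smul_dotProduct, dotProduct_smul, smul_eq_mul]
    ring
  have := mul_nonneg (mul_nonneg ha hb) (quadForm_nonneg hA (x - y))
  simp only [smul_eq_mul]
  linarith

theorem exists_quadForm_le (Q : Matrix ι ι ℝ) : ∃ c, 0 ≤ c ∧ ∀ x, quadForm Q x ≤ c * ‖x‖ ^ 2 := by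
  refine ⟨∑ i, ∑ j, |Q i j|, by positivity, fun x => ?_⟩
  simp only [quadForm, dotProduct, mulVec, Finset.sum_mul]
  refine Finset.sum_le_sum fun i _ => Finset.sum_le_sum fun j _ => (le_abs_self _).trans ?_
  rw [abs_mul, abs_mul, mul_assoc, sq]
  exact mul_le_mul_of_nonneg_left (mul_le_mul (norm_le_pi_norm x j) (norm_le_pi_norm x i)
    (abs_nonneg _) (norm_nonneg _)) (abs_nonneg _)

end QuadForm

section Gaussian

variable {k : ℕ} {A B : Matrix (Fin k) (Fin k) ℝ}

theorem gaussFn_eq (A : Matrix (Fin k) (Fin k) ℝ) (x : Fin k → ℝ) :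
    gaussFn A x = Real.exp (-(Real.pi * quadForm A x)) := by
  rw [gaussFn, quadForm, neg_mul]

theorem gaussFn_pos (A : Matrix (Fin k) (Fin k) ℝ) (x : Fin k → ℝ) : 0 < gaussFn A x :=
  Real.exp_pos _

@[fun_prop]
theorem continuous_gaussFn (A : Matrix (Fin k) (Fin k) ℝ) : Continuous (gaussFn A) := by
  simp_rw [funext (gaussFn_eq A)]
  fun_prop

theorem log_gaussFn (A : Matrix (Fin k) (Fin k) ℝ) (x : Fin k → ℝ) :
    Real.log (gaussFn A x) = -(Real.pi * quadForm A x) := by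
  rw [gaussFn_eq, Real.log_exp]

theorem gaussFn_le_gaussFn {x : Fin k → ℝ} (h : quadForm A x ≤ quadForm B x) :
    gaussFn B x ≤ gaussFn A x := by
  rw [gaussFn_eq, gaussFn_eq]
  gcongr

theorem gaussFn_one (x : Fin k → ℝ) :
    gaussFn (1 : Matrix (Fin k) (Fin k) ℝ) x = ∏ i, Real.exp (-Real.pi * x i ^ 2) := by
  simp only [gaussFn, one_mulVec, dotProduct, ← Real.exp_sum, Finset.mul_sum, sq]

theorem integrable_gaussFn_one : Integrable (gaussFn (1 : Matrix (Fin k) (Fin k) ℝ)) := by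
  rw [funext gaussFn_one]
  exact Integrable.fintype_prod (f := fun (_ : Fin k) (v : ℝ) => Real.exp (-Real.pi * v ^ 2))
    fun _ => integrable_exp_neg_mul_sq Real.pi_pos

theorem integral_gaussFn_one : ∫ x, gaussFn (1 : Matrix (Fin k) (Fin k) ℝ) x = 1 := by
  simp_rw [gaussFn_one]
  rw [integral_fintype_prod_volume_eq_prod
    (f := fun (_ : Fin k) (v : ℝ) => Real.exp (-Real.pi * v ^ 2))]
  simp only [integral_gaussian, div_self Real.pi_ne_zero, Real.sqrt_one, Finset.prod_const_one]

theorem gaussFn_star_mul_self (S : Matrix (Fin k) (Fin k) ℝ) :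
    gaussFn (star S * S) = gaussFn 1 ∘ toLin' S := by
  funext x
  simp only [gaussFn, one_mulVec, toLin'_apply, Function.comp_apply]
  rw [star_eq_conjTranspose, conjTranspose_eq_transpose_of_trivial, ← mulVec_mulVec,
    mulVec_transpose, ← dotProduct_mulVec]

open scoped MatrixOrder in
theorem integrable_gaussFn_and_integral (hA : A.PosDef) :
    Integrable (gaussFn A) ∧ ∫ x, gaussFn A x = (√A.det)⁻¹ := by
  obtain ⟨S, rfl⟩ := CStarAlgebra.nonneg_iff_eq_star_mul_self.mp hA.posSemidef.nonneg
  have hdet : (star S * S).det = S.det ^ 2 := by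
    rw [star_eq_conjTranspose, conjTranspose_eq_transpose_of_trivial, det_mul, det_transpose, sq]
  have hS : S.det ≠ 0 := fun h => by simpa [hdet, h] using hA.det_pos
  have hmap := Real.map_matrix_volume_pi_eq_smul_volume_pi hS
  have hmeas : AEMeasurable (toLin' S) (volume : Measure (Fin k → ℝ)) :=
    (LinearMap.continuous_on_pi _).measurable.aemeasurable
  have hcont : AEStronglyMeasurable (gaussFn (1 : Matrix (Fin k) (Fin k) ℝ))
      (volume.map (toLin' S)) := (continuous_gaussFn 1).aestronglyMeasurable
  rw [gaussFn_star_mul_self]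
  constructor
  · rw [← integrable_map_measure hcont hmeas, hmap]
    exact integrable_gaussFn_one.smul_measure ENNReal.ofReal_ne_top
  · simp only [Function.comp_apply]
    rw [← integral_map hmeas hcont, hmap, integral_smul_measure, integral_gaussFn_one, hdet,
      ENNReal.toReal_ofReal (abs_nonneg _), Real.sqrt_sq_eq_abs, abs_inv, smul_eq_mul, mul_one]

theorem integrable_gaussFn (hA : A.PosDef) : Integrable (gaussFn A) :=
  (integrable_gaussFn_and_integral hA).1

theorem integral_gaussFn (hA : A.PosDef) : ∫ x, gaussFn A x = (√A.det)⁻¹ :=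
  (integrable_gaussFn_and_integral hA).2

theorem posDef_add_smul_one (hA : A.PosSemidef) {ε : ℝ} (hε : 0 < ε) :
    (A + ε • (1 : Matrix (Fin k) (Fin k) ℝ)).PosDef :=
  PosDef.posSemidef_add hA (PosDef.one.smul hε)

theorem gaussFn_add_smul_one_le (A : Matrix (Fin k) (Fin k) ℝ) {ε : ℝ} (hε : 0 ≤ ε)
    (x : Fin k → ℝ) : gaussFn (A + ε • 1) x ≤ gaussFn A x := by
  refine gaussFn_le_gaussFn ?_
  rw [quadForm_add_smul_one]
  exact le_add_of_nonneg_right (mul_nonneg hε (Finset.sum_nonneg fun i _ => mul_self_nonneg (x i)))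

theorem posDef_of_integrable_gaussFn (hB : B.PosSemidef) (hi : Integrable (gaussFn B)) :
    B.PosDef := by
  refine hB.posDef_iff_isUnit.2 ((isUnit_iff_isUnit_det B).2 (isUnit_iff_ne_zero.2 fun hdet => ?_))
  have hle : ∀ ε : ℝ, 0 < ε →
      1 ≤ (∫ x, gaussFn B x) * √(B + ε • (1 : Matrix (Fin k) (Fin k) ℝ)).det := fun ε hε => by
    have hpd := posDef_add_smul_one hB hε
    rw [← div_le_iff₀ (Real.sqrt_pos.2 hpd.det_pos), one_div, ← integral_gaussFn hpd]
    exact integral_mono (integrable_gaussFn hpd) hi (gaussFn_add_smul_one_le B hε.le)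
  have hlim : Tendsto (fun ε : ℝ => (∫ x, gaussFn B x) *
      √(B + ε • (1 : Matrix (Fin k) (Fin k) ℝ)).det) (𝓝[>] 0) (𝓝 0) := by
    have hcont : Continuous fun ε : ℝ => (∫ x, gaussFn B x) *
        √(B + ε • (1 : Matrix (Fin k) (Fin k) ℝ)).det := by fun_prop
    simpa [hdet] using (hcont.tendsto 0).mono_left nhdsWithin_le_nhds
  exact zero_lt_one.not_ge (ge_of_tendsto hlim (eventually_mem_nhdsWithin.mono hle))

end Gaussian

section Convex

/-- The symmetric second difference `φ(x + w) + φ(x - w) - 2φ(x)`. -/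
def secondDiff {E : Type*} [AddGroup E] (φ : E → ℝ) (x w : E) : ℝ :=
  φ (x + w) + φ (x - w) - 2 * φ x

theorem secondDiff_nonneg {E : Type*} [AddCommGroup E] [Module ℝ E] {φ : E → ℝ}
    (hφ : ConvexOn ℝ Set.univ φ) (x w : E) : 0 ≤ secondDiff φ x w := by
  have h := hφ.2 (Set.mem_univ (x + w)) (Set.mem_univ (x - w)) one_half_pos.le one_half_pos.le
    (add_halves 1)
  rw [show (1 / 2 : ℝ) • (x + w) + (1 / 2 : ℝ) • (x - w) = x by module, smul_eq_mul,
    smul_eq_mul] at h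
  rw [secondDiff]
  linarith

theorem secondDiff_quadForm {ι : Type*} [Fintype ι] (Q : Matrix ι ι ℝ) (x w : ι → ℝ) :
    secondDiff (quadForm Q) x w = 2 * quadForm Q w := by
  rw [secondDiff, quadForm_add_add_quadForm_sub]
  ring

theorem convexOn_prodMk_left {E F : Type*} [AddCommGroup E] [Module ℝ E] [AddCommGroup F]
    [Module ℝ F] {φ : E × F → ℝ} (hφ : ConvexOn ℝ Set.univ φ) (z : F) :
    ConvexOn ℝ Set.univ fun y => φ (y, z) :=
  hφ.comp_affineMap ((AffineMap.id ℝ E).prod (AffineMap.const ℝ E z))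

theorem convexOn_prodMk_right {E F : Type*} [AddCommGroup E] [Module ℝ E] [AddCommGroup F]
    [Module ℝ F] {φ : E × F → ℝ} (hφ : ConvexOn ℝ Set.univ φ) (y : E) :
    ConvexOn ℝ Set.univ fun z => φ (y, z) :=
  hφ.comp_affineMap ((AffineMap.const ℝ F y).prod (AffineMap.id ℝ F))

theorem integral_rpow_mul_rpow_le {α : Type*} [MeasurableSpace α] {μ : Measure α} {u v : α → ℝ}
    (hu : Integrable u μ) (hv : Integrable v μ) (hu0 : 0 ≤ u) (hv0 : 0 ≤ v) {a b : ℝ}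
    (ha : 0 ≤ a) (hb : 0 ≤ b) (hab : a + b = 1) :
    ∫ z, u z ^ a * v z ^ b ∂μ ≤ (∫ z, u z ∂μ) ^ a * (∫ z, v z ∂μ) ^ b := by
  have hmeas : AEStronglyMeasurable (fun z => u z ^ a * v z ^ b) μ :=
    ((hu.aemeasurable.pow_const a).mul (hv.aemeasurable.pow_const b)).aestronglyMeasurable
  have hof : ∀ z, ENNReal.ofReal (u z ^ a * v z ^ b) =
      ENNReal.ofReal (u z) ^ a * ENNReal.ofReal (v z) ^ b := fun z => by
    rw [ENNReal.ofReal_mul (Real.rpow_nonneg (hu0 z) a), ENNReal.ofReal_rpow_of_nonneg (hu0 z) ha,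
      ENNReal.ofReal_rpow_of_nonneg (hv0 z) hb]
  rw [integral_eq_lintegral_of_nonneg_ae (.of_forall fun z => mul_nonneg
    (Real.rpow_nonneg (hu0 z) a) (Real.rpow_nonneg (hv0 z) b)) hmeas]
  simp_rw [hof]
  refine ENNReal.toReal_le_of_le_ofReal (mul_nonneg (Real.rpow_nonneg (integral_nonneg hu0) a)
    (Real.rpow_nonneg (integral_nonneg hv0) b)) ?_
  rw [ENNReal.ofReal_mul (Real.rpow_nonneg (integral_nonneg hu0) a),
    ← ENNReal.ofReal_rpow_of_nonneg (integral_nonneg hu0) ha,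
    ← ENNReal.ofReal_rpow_of_nonneg (integral_nonneg hv0) hb,
    ofReal_integral_eq_lintegral_ofReal hu (.of_forall hu0),
    ofReal_integral_eq_lintegral_ofReal hv (.of_forall hv0)]
  exact ENNReal.lintegral_mul_norm_pow_le hu.aemeasurable.ennreal_ofReal
    hv.aemeasurable.ennreal_ofReal ha hb hab

theorem convexOn_log_integral {E α : Type*} [AddCommGroup E] [Module ℝ E] [MeasurableSpace α]
    {μ : Measure α} {R : E → α → ℝ} (hpos : ∀ y z, 0 < R y z)
    (hconv : ∀ z, ConvexOn ℝ Set.univ fun y => Real.log (R y z))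
    (hint : ∀ y, Integrable (R y) μ) (hintpos : ∀ y, 0 < ∫ z, R y z ∂μ) :
    ConvexOn ℝ Set.univ fun y => Real.log (∫ z, R y z ∂μ) := by
  refine ⟨convex_univ, fun x _ y _ a b ha hb hab => ?_⟩
  have hle : ∀ z, R (a • x + b • y) z ≤ R x z ^ a * R y z ^ b := fun z => by
    rw [Real.rpow_def_of_pos (hpos x z), Real.rpow_def_of_pos (hpos y z), ← Real.exp_add,
      ← Real.log_le_iff_le_exp (hpos _ z), mul_comm _ a, mul_comm _ b]
    exact (hconv z).2 trivial trivial ha hb hab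
  have hxy : Integrable (fun z => R x z ^ a * R y z ^ b) μ := by
    refine (((hint x).const_mul a).add ((hint y).const_mul b)).mono'
      (((hint x).aemeasurable.pow_const a).mul
        ((hint y).aemeasurable.pow_const b)).aestronglyMeasurable (.of_forall fun z => ?_)
    have hx := Real.rpow_pos_of_pos (hpos x z) a
    have hy := Real.rpow_pos_of_pos (hpos y z) b
    rw [Real.norm_of_nonneg (mul_pos hx hy).le]
    exact Real.geom_mean_le_arith_mean2_weighted ha hb (hpos x z).le (hpos y z).le hab
  calc Real.log (∫ z, R (a • x + b • y) z ∂μ)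
      ≤ Real.log ((∫ z, R x z ∂μ) ^ a * (∫ z, R y z ∂μ) ^ b) :=
        Real.log_le_log (hintpos _) ((integral_mono (hint _) hxy hle).trans
          (integral_rpow_mul_rpow_le (hint x) (hint y) (fun z => (hpos x z).le)
            (fun z => (hpos y z).le) ha hb hab))
    _ = a • Real.log (∫ z, R x z ∂μ) + b • Real.log (∫ z, R y z ∂μ) := by
        rw [Real.log_mul (Real.rpow_pos_of_pos (hintpos x) a).ne'
          (Real.rpow_pos_of_pos (hintpos y) b).ne', Real.log_rpow (hintpos x),
          Real.log_rpow (hintpos y), smul_eq_mul, smul_eq_mul]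

end Convex

section Rotation

variable {E : Type*} [AddCommGroup E] [Module ℝ E]

/-- The map `(x, z) ↦ ((x + z)/√2, (x - z)/√2)` on `E × E`, an orthogonal involution. -/
def prodRotation (E : Type*) [AddCommGroup E] [Module ℝ E] : E × E →ₗ[ℝ] E × E :=
  (√2 : ℝ)⁻¹ • (LinearMap.fst ℝ E E + LinearMap.snd ℝ E E).prod
    (LinearMap.fst ℝ E E - LinearMap.snd ℝ E E)

theorem prodRotation_apply (x z : E) :
    prodRotation E (x, z) = ((√2 : ℝ)⁻¹ • (x + z), (√2 : ℝ)⁻¹ • (x - z)) := rfl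

theorem involutive_prodRotation : Function.Involutive (prodRotation E) := fun ⟨x, z⟩ => by
  have h2 : (√2 : ℝ)⁻¹ * (√2 : ℝ)⁻¹ = 1 / 2 := by
    rw [← mul_inv, Real.mul_self_sqrt zero_le_two, one_div]
  simp only [prodRotation_apply, ← smul_add, ← smul_sub, smul_smul, h2]
  ext <;> module

theorem measurePreserving_prodRotation {E : Type*} [NormedAddCommGroup E] [NormedSpace ℝ E]
    [FiniteDimensional ℝ E] [MeasurableSpace E] [BorelSpace E] (μ : Measure E)
    [μ.IsAddHaarMeasure] : MeasurePreserving (prodRotation E) (μ.prod μ) (μ.prod μ) := by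
  have hdet : LinearMap.det (prodRotation E) * LinearMap.det (prodRotation E) = 1 := by
    rw [← LinearMap.det_comp, show prodRotation E ∘ₗ prodRotation E = LinearMap.id from
      LinearMap.ext involutive_prodRotation, LinearMap.det_id]
  have habs : |LinearMap.det (prodRotation E)| = 1 := by
    nlinarith [abs_mul_abs_self (LinearMap.det (prodRotation E)),
      abs_nonneg (LinearMap.det (prodRotation E))]
  refine ⟨(prodRotation E).continuous_of_finiteDimensional.measurable, ?_⟩
  rw [Measure.map_linearMap_addHaar_eq_smul_addHaar _ (left_ne_zero_of_mul_eq_one hdet), abs_inv,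
    habs, inv_one, ENNReal.ofReal_one, one_smul]

/-- The product `u ⊗ v` in rotated coordinates, `(y, z) ↦ u((y + z)/√2) v((y - z)/√2)`. Its
integral over `z` is `Conv u v`. -/
def rotProd (u v : E → ℝ) (y z : E) : ℝ :=
  u ((√2 : ℝ)⁻¹ • (y + z)) * v ((√2 : ℝ)⁻¹ • (y - z))

theorem quadForm_add_quadForm_rotated {ι : Type*} [Fintype ι] (Q : Matrix ι ι ℝ) (x z : ι → ℝ) :
    quadForm Q ((√2 : ℝ)⁻¹ • (x + z)) + quadForm Q ((√2 : ℝ)⁻¹ • (x - z)) =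
      quadForm Q x + quadForm Q z := by
  rw [quadForm_smul, quadForm_smul, ← mul_add, quadForm_add_add_quadForm_sub, inv_pow,
    Real.sq_sqrt zero_le_two]
  ring

variable {k : ℕ} {u v : (Fin k → ℝ) → ℝ}

theorem rotProd_gaussFn (Q : Matrix (Fin k) (Fin k) ℝ) (x z : Fin k → ℝ) :
    rotProd (gaussFn Q) (gaussFn Q) x z = gaussFn Q x * gaussFn Q z := by
  simp only [rotProd, gaussFn_eq, ← Real.exp_add]
  congr 1
  linear_combination (-Real.pi) * quadForm_add_quadForm_rotated Q x z

theorem conv_eq_integral_rotProd (u v : (Fin k → ℝ) → ℝ) (y : Fin k → ℝ) :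
    Conv u v y = ∫ z, rotProd u v y z := by
  have hs : (√2 : ℝ) ≠ 0 := by positivity
  have h2 : (√2 : ℝ)⁻¹ * 2 = √2 := by rw [inv_mul_eq_div, Real.div_sqrt]
  have hpow : (2 : ℝ) ^ ((k : ℝ) / 2) = √2 ^ k := by
    rw [Real.sqrt_eq_rpow, ← Real.rpow_natCast, ← Real.rpow_mul zero_le_two, one_div_mul_eq_div]
  have hrot : ∀ w, rotProd u v y (y - (√2 : ℝ) • w) = u ((√2 : ℝ) • y - w) * v w := fun w => by
    rw [rotProd, sub_sub_cancel, inv_smul_smul₀ hs,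
      show y + (y - (√2 : ℝ) • w) = (2 : ℝ) • y - (√2 : ℝ) • w by module, smul_sub, smul_smul, h2,
      inv_smul_smul₀ hs]
  have h := Measure.integral_comp_smul volume (fun z => rotProd u v y (y - z)) (√2)
  simp only [hrot, integral_sub_left_eq_self (fun z => rotProd u v y z) volume y,
    Module.finrank_fin_fun] at h
  rw [Conv, h, hpow, smul_eq_mul, abs_of_nonneg (by positivity), mul_inv_cancel_left₀]
  positivity

theorem integrable_uncurry_rotProd (hu : Integrable u) (hv : Integrable v) :
    Integrable (Function.uncurry (rotProd u v)) (volume.prod volume) :=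
  (measurePreserving_prodRotation volume).integrable_comp_of_integrable (hu.mul_prod hv)

theorem integrable_conv (hu : Integrable u) (hv : Integrable v) : Integrable (Conv u v) := by
  rw [funext (conv_eq_integral_rotProd u v)]
  exact (integrable_uncurry_rotProd hu hv).integral_prod_left

theorem integral_conv (hu : Integrable u) (hv : Integrable v) :
    ∫ y, Conv u v y = (∫ y, u y) * ∫ y, v y := by
  simp_rw [conv_eq_integral_rotProd]
  have hmp := measurePreserving_prodRotation (volume : Measure (Fin k → ℝ))
  calc ∫ y, ∫ z, rotProd u v y z
      = ∫ q, Function.uncurry (rotProd u v) q ∂volume.prod volume :=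
        (integral_prod _ (integrable_uncurry_rotProd hu hv)).symm
    _ = ∫ q, u q.1 * v q.2 ∂(volume.prod volume).map (prodRotation (Fin k → ℝ)) :=
        (integral_map hmp.aemeasurable
          (by rw [hmp.map_eq]; exact (hu.mul_prod hv).aestronglyMeasurable)).symm
    _ = (∫ y, u y) * ∫ y, v y := by rw [hmp.map_eq, integral_prod_mul]

theorem lintegral_lintegral_rotProd (hu : Measurable u) (hv : Measurable v) (hu0 : 0 ≤ u) :
    ∫⁻ y, ∫⁻ z, ENNReal.ofReal (rotProd u v y z) =
      (∫⁻ y, ENNReal.ofReal (u y)) * ∫⁻ y, ENNReal.ofReal (v y) := by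
  have hmp := measurePreserving_prodRotation (volume : Measure (Fin k → ℝ))
  have hmeas : Measurable fun q : (Fin k → ℝ) × (Fin k → ℝ) =>
      ENNReal.ofReal (u q.1) * ENNReal.ofReal (v q.2) := by fun_prop
  rw [← lintegral_prod_mul hu.ennreal_ofReal.aemeasurable hv.ennreal_ofReal.aemeasurable,
    ← hmp.lintegral_comp hmeas]
  refine Eq.trans ?_ (lintegral_prod _ (hmeas.comp hmp.measurable).aemeasurable).symm
  exact lintegral_congr fun y => lintegral_congr fun z => ENNReal.ofReal_mul (hu0 _)

end Rotation

theorem lintegral_le_of_tendsto {α : Type*} [MeasurableSpace α] {μ : Measure α}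
    {F : ℕ → α → ℝ≥0∞} {f : α → ℝ≥0∞} {I : ℕ → ℝ≥0∞} {a : ℝ≥0∞} (hF : ∀ j, Measurable (F j))
    (hlim : ∀ x, Tendsto (fun j => F j x) atTop (𝓝 (f x))) (hle : ∀ j, ∫⁻ x, F j x ∂μ ≤ I j)
    (hI : Tendsto I atTop (𝓝 a)) : ∫⁻ x, f x ∂μ ≤ a :=
  calc ∫⁻ x, f x ∂μ
    _ = ∫⁻ x, liminf (fun j => F j x) atTop ∂μ :=
        lintegral_congr fun x => (hlim x).liminf_eq.symm
    _ ≤ liminf (fun j => ∫⁻ x, F j x ∂μ) atTop := lintegral_liminf_le hF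
    _ ≤ liminf I atTop := liminf_le_liminf (.of_forall hle)
    _ = a := hI.liminf_eq

/-- The logarithm of the quotient of `f` by the Gaussian `g_Q`. It is convex when `f` is positive
and more log-convex than `g_Q`. -/
def logQuot {k : ℕ} (Q : Matrix (Fin k) (Fin k) ℝ) (f : (Fin k → ℝ) → ℝ) (x : Fin k → ℝ) : ℝ :=
  Real.log (f x) + Real.pi * quadForm Q x

theorem secondDiff_logQuot {k : ℕ} (Q : Matrix (Fin k) (Fin k) ℝ) (f : (Fin k → ℝ) → ℝ)
    (x w : Fin k → ℝ) : secondDiff (logQuot Q f) x w =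
      secondDiff (Real.log ∘ f) x w + 2 * Real.pi * quadForm Q w := by
  have hquad := secondDiff_quadForm Q x w
  simp only [secondDiff, logQuot, Function.comp_apply] at hquad ⊢
  linear_combination Real.pi * hquad

theorem LogConvexFun.pos_of_pos {k : ℕ} {h : (Fin k → ℝ) → ℝ} (hh : LogConvexFun h)
    {z : Fin k → ℝ} (hz : 0 < h z) (x : Fin k → ℝ) : 0 < h x := by
  refine (hh.1 x).lt_of_ne fun hx => hz.not_ge ?_
  have hmid := hh.2 x ((2 : ℝ) • z - x) (1 / 2) (1 / 2) one_half_pos.le one_half_pos.le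
    (add_halves 1)
  rwa [show (1 / 2 : ℝ) • x + (1 / 2 : ℝ) • ((2 : ℝ) • z - x) = z by module, ← hx,
    Real.zero_rpow one_half_pos.ne', zero_mul] at hmid

/-- A positive integrable function that is more log-convex than `g_Q`: for integrable `f` that do
not vanish almost everywhere this is equivalent to `MoreLogConvex f Q`. -/
structure SemiconvexDensity {k : ℕ} (Q : Matrix (Fin k) (Fin k) ℝ) (f : (Fin k → ℝ) → ℝ) :
    Prop where
  pos : ∀ x, 0 < f x
  convexOn_logQuot : ConvexOn ℝ Set.univ (logQuot Q f)
  integrable : Integrable f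

theorem semiconvexDensity_gaussFn {k : ℕ} {Q B : Matrix (Fin k) (Fin k) ℝ}
    (hB : (Q - B).PosSemidef) (hi : Integrable (gaussFn B)) : SemiconvexDensity Q (gaussFn B) := by
  refine ⟨gaussFn_pos B, ((convexOn_quadForm hB).smul Real.pi_pos.le).congr fun x _ => ?_, hi⟩
  simp only [logQuot, log_gaussFn, sub_quadForm, smul_eq_mul]
  ring

namespace SemiconvexDensity

variable {k : ℕ} {Q : Matrix (Fin k) (Fin k) ℝ} {f g : (Fin k → ℝ) → ℝ}

theorem of_moreLogConvex (hf : MoreLogConvex f Q) (hi : Integrable f)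
    (hne : ¬ f =ᵐ[volume] 0) : SemiconvexDensity Q f := by
  obtain ⟨h, hh, rfl⟩ := hf
  obtain ⟨z, hz⟩ : ∃ z, h z ≠ 0 := by
    by_contra! hz
    exact hne (.of_forall fun x => by simp [hz x])
  have hpos : ∀ x, 0 < h x := hh.pos_of_pos ((hh.1 z).lt_of_ne' hz)
  refine ⟨fun x => mul_pos (gaussFn_pos Q x) (hpos x), ⟨convex_univ, ?_⟩, hi⟩
  intro x _ y _ a b ha hb hab
  have hlog : ∀ x, logQuot Q (fun x => gaussFn Q x * h x) x = Real.log (h x) := fun x => by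
    rw [logQuot, Real.log_mul (gaussFn_pos Q x).ne' (hpos x).ne', log_gaussFn]
    ring
  rw [hlog, hlog, hlog, smul_eq_mul, smul_eq_mul, ← Real.log_rpow (hpos x),
    ← Real.log_rpow (hpos y),
    ← Real.log_mul (Real.rpow_pos_of_pos (hpos x) a).ne' (Real.rpow_pos_of_pos (hpos y) b).ne']
  exact Real.log_le_log (hpos _) (hh.2 x y a b ha hb hab)

theorem eq_exp (hf : SemiconvexDensity Q f) (x : Fin k → ℝ) :
    f x = Real.exp (logQuot Q f x - Real.pi * quadForm Q x) := by
  rw [logQuot, add_sub_cancel_right, Real.exp_log (hf.pos x)]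

theorem moreLogConvex (hf : SemiconvexDensity Q f) : MoreLogConvex f Q := by
  refine ⟨fun x => Real.exp (logQuot Q f x),
    ⟨fun x => (Real.exp_pos _).le, fun x y a b ha hb hab => ?_⟩, funext fun x => ?_⟩
  · rw [← Real.exp_mul, ← Real.exp_mul, ← Real.exp_add, Real.exp_le_exp, mul_comm _ a, mul_comm _ b]
    exact hf.convexOn_logQuot.2 trivial trivial ha hb hab
  · rw [hf.eq_exp, gaussFn_eq, ← Real.exp_add, neg_add_eq_sub]

theorem continuous (hf : SemiconvexDensity Q f) : Continuous f := by
  have : Continuous (logQuot Q f) := hf.convexOn_logQuot.locallyLipschitz.continuous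
  rw [funext hf.eq_exp]
  fun_prop

theorem integral_pos (hf : SemiconvexDensity Q f) : 0 < ∫ x, f x := by
  rw [integral_pos_iff_support_of_nonneg (fun x => (hf.pos x).le) hf.integrable,
    Function.support_eq_univ fun x => (hf.pos x).ne']
  exact Measure.measure_univ_pos.2 (NeZero.ne _)

theorem ofReal_integral (hf : SemiconvexDensity Q f) :
    ENNReal.ofReal (∫ x, f x) = ∫⁻ x, ENNReal.ofReal (f x) :=
  ofReal_integral_eq_lintegral_ofReal hf.integrable (.of_forall fun x => (hf.pos x).le)

theorem neg_le_secondDiff_log (hf : SemiconvexDensity Q f) (x z : Fin k → ℝ) :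
    -(2 * Real.pi * quadForm Q z) ≤ secondDiff (Real.log ∘ f) x z := by
  rw [neg_le_iff_add_nonneg, ← secondDiff_logQuot]
  exact secondDiff_nonneg hf.convexOn_logQuot x z

theorem sq_mul_gaussFn_le (hf : SemiconvexDensity Q f) (x z : Fin k → ℝ) :
    (f x * gaussFn Q z) ^ 2 ≤ f (x + z) * f (x - z) := by
  have hxz := mul_pos (hf.pos (x + z)) (hf.pos (x - z))
  rw [← Real.log_le_log_iff (pow_pos (mul_pos (hf.pos x) (gaussFn_pos Q z)) 2) hxz, Real.log_pow,
    Real.log_mul (hf.pos x).ne' (gaussFn_pos Q z).ne', log_gaussFn,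
    Real.log_mul (hf.pos _).ne' (hf.pos _).ne']
  have := hf.neg_le_secondDiff_log x z
  simp only [secondDiff, Function.comp_apply] at this
  push_cast
  linarith

theorem mul_gaussFn_le (hf : SemiconvexDensity Q f) (x z : Fin k → ℝ) :
    f x * gaussFn Q z ≤ (f (x + z) + f (x - z)) / 2 := by
  refine le_of_abs_le (abs_le_of_sq_le_sq ?_ ?_)
  · nlinarith [hf.sq_mul_gaussFn_le x z, sq_nonneg (f (x + z) - f (x - z))]
  · linarith [hf.pos (x + z), hf.pos (x - z)]

theorem integrable_translates (hf : SemiconvexDensity Q f) (x : Fin k → ℝ) :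
    Integrable fun z => (f (x + z) + f (x - z)) / 2 :=
  ((hf.integrable.comp_add_left x).add (hf.integrable.comp_sub_left x)).div_const 2

protected theorem integrable_gaussFn (hf : SemiconvexDensity Q f) : Integrable (gaussFn Q) := by
  have h : Integrable fun z => f 0 * gaussFn Q z :=
    (hf.integrable_translates 0).mono' (by fun_prop) (.of_forall fun z => by
      rw [Real.norm_of_nonneg (mul_pos (hf.pos 0) (gaussFn_pos Q z)).le]
      exact hf.mul_gaussFn_le 0 z)
  simpa [(hf.pos 0).ne'] using h.const_mul (f 0)⁻¹

theorem mul_integral_gaussFn_le (hf : SemiconvexDensity Q f) (x : Fin k → ℝ) :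
    f x * ∫ z, gaussFn Q z ≤ ∫ z, f z := by
  calc f x * ∫ z, gaussFn Q z = ∫ z, f x * gaussFn Q z := (integral_const_mul _ _).symm
    _ ≤ ∫ z, (f (x + z) + f (x - z)) / 2 :=
      integral_mono (hf.integrable_gaussFn.const_mul _) (hf.integrable_translates x)
        (hf.mul_gaussFn_le x)
    _ = ∫ z, f z := by
      rw [integral_div, integral_add (hf.integrable.comp_add_left x)
        (hf.integrable.comp_sub_left x), integral_add_left_eq_self f x,
        integral_sub_left_eq_self f volume x, add_self_div_two]

theorem le_integral_div (hf : SemiconvexDensity Q f) (x : Fin k → ℝ) :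
    f x ≤ (∫ z, f z) / ∫ z, gaussFn Q z :=
  (le_div_iff₀ (semiconvexDensity_gaussFn (by rw [sub_self]; exact PosSemidef.zero)
    hf.integrable_gaussFn).integral_pos).2 (hf.mul_integral_gaussFn_le x)

theorem const_mul (hf : SemiconvexDensity Q f) {c : ℝ} (hc : 0 < c) :
    SemiconvexDensity Q fun x => c * f x := by
  refine ⟨fun x => mul_pos hc (hf.pos x), ?_, hf.integrable.const_mul c⟩
  refine ((convexOn_const (Real.log c) convex_univ).add hf.convexOn_logQuot).congr fun x _ => ?_
  simp only [Pi.add_apply, logQuot, Real.log_mul hc.ne' (hf.pos x).ne']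
  ring

theorem logQuot_rotProd (hf : SemiconvexDensity Q f) (hg : SemiconvexDensity Q g)
    (y z : Fin k → ℝ) : logQuot Q (rotProd f g y) z + Real.pi * quadForm Q y =
      logQuot Q f ((√2 : ℝ)⁻¹ • (y + z)) + logQuot Q g ((√2 : ℝ)⁻¹ • (y - z)) := by
  simp only [logQuot, rotProd, Real.log_mul (hf.pos _).ne' (hg.pos _).ne']
  linear_combination (-Real.pi) * quadForm_add_quadForm_rotated Q y z

theorem convexOn_logQuot_rotProd (hf : SemiconvexDensity Q f) (hg : SemiconvexDensity Q g) :
    ConvexOn ℝ Set.univ fun q : (Fin k → ℝ) × (Fin k → ℝ) =>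
      logQuot Q (rotProd f g q.1) q.2 + Real.pi * quadForm Q q.1 := by
  simp_rw [hf.logQuot_rotProd hg]
  exact (hf.convexOn_logQuot.comp_linearMap (LinearMap.fst ℝ _ _ ∘ₗ prodRotation _)).add
    (hg.convexOn_logQuot.comp_linearMap (LinearMap.snd ℝ _ _ ∘ₗ prodRotation _))

protected theorem rotProd (hf : SemiconvexDensity Q f) (hg : SemiconvexDensity Q g)
    (y : Fin k → ℝ) : SemiconvexDensity Q (rotProd f g y) := by
  refine ⟨fun z => mul_pos (hf.pos _) (hg.pos _), ?_, ?_⟩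
  · refine ((convexOn_prodMk_right (hf.convexOn_logQuot_rotProd hg) y).add_const
      (-(Real.pi * quadForm Q y))).congr fun z _ => ?_
    simp only [Pi.add_apply, add_neg_cancel_right]
  · refine Integrable.bdd_mul (c := (∫ z, f z) / ∫ z, gaussFn Q z)
      ((hg.integrable.comp_smul (inv_ne_zero (by positivity))).comp_sub_left y)
      ?_ (.of_forall fun z => ?_)
    · have := hf.continuous
      fun_prop
    · rw [Real.norm_of_nonneg (hf.pos _).le]
      exact hf.le_integral_div _

theorem conv (hf : SemiconvexDensity Q f) (hg : SemiconvexDensity Q g) :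
    SemiconvexDensity Q (Conv f g) := by
  have hpos : ∀ y, 0 < Conv f g y := fun y => by
    rw [conv_eq_integral_rotProd]
    exact (hf.rotProd hg y).integral_pos
  refine ⟨hpos, ?_, integrable_conv hf.integrable hg.integrable⟩
  have hR : ∀ y, logQuot Q (Conv f g) y =
      Real.log (∫ z, Real.exp (Real.pi * quadForm Q y) * rotProd f g y z) := fun y => by
    rw [integral_const_mul, ← conv_eq_integral_rotProd, Real.log_mul (Real.exp_pos _).ne'
      (hpos y).ne', Real.log_exp, add_comm, logQuot]
  rw [funext hR]
  refine convexOn_log_integral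
    (fun y z => mul_pos (Real.exp_pos _) ((hf.rotProd hg y).pos z)) (fun z => ?_)
    (fun y => (hf.rotProd hg y).integrable.const_mul _)
    fun y => ((hf.rotProd hg y).const_mul (Real.exp_pos _)).integral_pos
  refine ((convexOn_prodMk_left (hf.convexOn_logQuot_rotProd hg) z).add_const
    (-(Real.pi * quadForm Q z))).congr fun y _ => ?_
  simp only [Pi.add_apply, logQuot, Real.log_mul (Real.exp_pos _).ne' ((hf.rotProd hg y).pos z).ne',
    Real.log_exp]
  ring

theorem of_tendsto {u : ℕ → (Fin k → ℝ) → ℝ} (hu : ∀ j, SemiconvexDensity Q (u j))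
    (hf : ∀ x, 0 < f x) (hlim : ∀ x, Tendsto (fun j => u j x) atTop (𝓝 (f x))) {I : ℝ}
    (hI : Tendsto (fun j => ∫ x, u j x) atTop (𝓝 I)) :
    SemiconvexDensity Q f ∧ ∫ x, f x ≤ I := by
  have hcont : ∀ j, Continuous (u j) := fun j => (hu j).continuous
  have hmeas : Measurable f := measurable_of_tendsto_metrizable (fun j => (hcont j).measurable)
    (tendsto_pi_nhds.2 hlim)
  have hlint : ∫⁻ x, ENNReal.ofReal (f x) ≤ ENNReal.ofReal I :=
    lintegral_le_of_tendsto (fun j => (hcont j).measurable.ennreal_ofReal)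
      (fun x => (ENNReal.continuous_ofReal.tendsto _).comp (hlim x))
      (fun j => (hu j).ofReal_integral.ge) ((ENNReal.continuous_ofReal.tendsto _).comp hI)
  have hint : Integrable f := ⟨hmeas.aestronglyMeasurable, by
    rw [hasFiniteIntegral_iff_ofReal (.of_forall fun x => (hf x).le)]
    exact hlint.trans_lt ENNReal.ofReal_lt_top⟩
  refine ⟨⟨hf, isClosed_setOfPred_convexOn.mem_of_tendsto
    (tendsto_pi_nhds.2 fun x => ((hlim x).log (hf x).ne').add_const _)
    (.of_forall fun j => (hu j).convexOn_logQuot), hint⟩, ?_⟩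
  rw [← ofReal_integral_eq_lintegral_ofReal hint (.of_forall fun x => (hf x).le)] at hlint
  exact (ENNReal.ofReal_le_ofReal_iff (ge_of_tendsto' hI fun j => (hu j).integral_pos.le)).1 hlint

end SemiconvexDensity

section Functional

variable {n m : ℕ} {ni : Fin m → ℕ} {C : ∀ i, Matrix (Fin (ni i)) (Fin n) ℝ} {p : Fin m → ℝ}
  {Q : ∀ i, Matrix (Fin (ni i)) (Fin (ni i)) ℝ} {𝒬 : Matrix (Fin n) (Fin n) ℝ}
  {f g : ∀ i, (Fin (ni i) → ℝ) → ℝ}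

/-- The integrand `e^{-π⟨𝒬x,x⟩} ∏ᵢ fᵢ(Cᵢx)^{pᵢ}` of the Brascamp–Lieb functional. -/
def blIntegrand (C : ∀ i, Matrix (Fin (ni i)) (Fin n) ℝ) (p : Fin m → ℝ)
    (𝒬 : Matrix (Fin n) (Fin n) ℝ) (f : ∀ i, (Fin (ni i) → ℝ) → ℝ) (x : Fin n → ℝ) : ℝ :=
  gaussFn 𝒬 x * ∏ i, f i (C i *ᵥ x) ^ p i

/-- The Brascamp–Lieb functional `∫ e^{-π⟨𝒬x,x⟩} ∏ᵢ fᵢ(Cᵢx)^{pᵢ} dx`. -/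
def blForm (C : ∀ i, Matrix (Fin (ni i)) (Fin n) ℝ) (p : Fin m → ℝ)
    (𝒬 : Matrix (Fin n) (Fin n) ℝ) (f : ∀ i, (Fin (ni i) → ℝ) → ℝ) : ℝ≥0∞ :=
  ∫⁻ x, ENNReal.ofReal (blIntegrand C p 𝒬 f x)

/-- The product `∏ᵢ (∫ fᵢ)^{pᵢ}` against which the Brascamp–Lieb functional is compared. -/
def massProd (p : Fin m → ℝ) (f : ∀ i, (Fin (ni i) → ℝ) → ℝ) : ℝ :=
  ∏ i, (∫ y, f i y) ^ p i

/-- The inputs of the regularized Brascamp–Lieb inequality: the `i`-th component is a positive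
integrable function that is more log-convex than `g_{Qᵢ}`. -/
def Admissible (Q : ∀ i, Matrix (Fin (ni i)) (Fin (ni i)) ℝ)
    (f : ∀ i, (Fin (ni i) → ℝ) → ℝ) : Prop :=
  ∀ i, SemiconvexDensity (Q i) (f i)

/-- The best constant of the regularized Brascamp–Lieb inequality over all admissible tuples, as
opposed to the constant `BLconstQ` over Gaussian tuples. -/
def blSup (C : ∀ i, Matrix (Fin (ni i)) (Fin n) ℝ) (p : Fin m → ℝ)
    (Q : ∀ i, Matrix (Fin (ni i)) (Fin (ni i)) ℝ) (𝒬 : Matrix (Fin n) (Fin n) ℝ) : ℝ≥0∞ :=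
  ⨆ (f : ∀ i, (Fin (ni i) → ℝ) → ℝ) (_ : Admissible Q f),
    blForm C p 𝒬 f / ENNReal.ofReal (massProd p f)

/-- The tuple `z ↦ fᵢ((Cᵢx + z)/√2) gᵢ((Cᵢx - z)/√2)` obtained by freezing the first of the two
rotated variables. -/
def rotTuple (C : ∀ i, Matrix (Fin (ni i)) (Fin n) ℝ) (f g : ∀ i, (Fin (ni i) → ℝ) → ℝ)
    (x : Fin n → ℝ) (i : Fin m) : (Fin (ni i) → ℝ) → ℝ :=
  rotProd (f i) (g i) (C i *ᵥ x)

theorem blIntegrand_nonneg (hf : ∀ i y, 0 ≤ f i y) (x : Fin n → ℝ) : 0 ≤ blIntegrand C p 𝒬 f x :=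
  mul_nonneg (gaussFn_pos _ _).le (Finset.prod_nonneg fun i _ => Real.rpow_nonneg (hf i _) _)

theorem continuous_blIntegrand (hp : ∀ i, 0 ≤ p i) (hf : ∀ i, Continuous (f i)) :
    Continuous (blIntegrand C p 𝒬 f) := by
  refine (continuous_gaussFn 𝒬).mul (continuous_finsetProd _ fun i _ => ?_)
  exact ((hf i).comp (continuous_const.matrix_mulVec continuous_id)).rpow_const
    fun x => Or.inr (hp i)

theorem measurable_ofReal_blIntegrand (hp : ∀ i, 0 ≤ p i) (hf : ∀ i, Continuous (f i)) :
    Measurable fun x => ENNReal.ofReal (blIntegrand C p 𝒬 f x) :=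
  (continuous_blIntegrand hp hf).measurable.ennreal_ofReal

theorem blIntegrand_mono (hp : ∀ i, 0 ≤ p i) (hf : ∀ i y, 0 ≤ f i y)
    (hfg : ∀ i y, f i y ≤ g i y) (x : Fin n → ℝ) :
    blIntegrand C p 𝒬 f x ≤ blIntegrand C p 𝒬 g x :=
  mul_le_mul_of_nonneg_left (Finset.prod_le_prod (fun i _ => Real.rpow_nonneg (hf i _) _)
    fun i _ => Real.rpow_le_rpow (hf i _) (hfg i _) (hp i)) (gaussFn_pos _ _).le

theorem blForm_mono (hp : ∀ i, 0 ≤ p i) (hf : ∀ i y, 0 ≤ f i y)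
    (hfg : ∀ i y, f i y ≤ g i y) : blForm C p 𝒬 f ≤ blForm C p 𝒬 g :=
  lintegral_mono fun x => ENNReal.ofReal_le_ofReal (blIntegrand_mono hp hf hfg x)

theorem blForm_const_mul {a : Fin m → ℝ} (ha : ∀ i, 0 ≤ a i) (hf : ∀ i y, 0 ≤ f i y) :
    blForm C p 𝒬 (fun i y => a i * f i y) =
      ENNReal.ofReal (∏ i, a i ^ p i) * blForm C p 𝒬 f := by
  rw [blForm, blForm, ← lintegral_const_mul' _ _ ENNReal.ofReal_ne_top]
  refine lintegral_congr fun x => ?_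
  rw [← ENNReal.ofReal_mul (Finset.prod_nonneg fun i _ => Real.rpow_nonneg (ha i) _)]
  congr 1
  simp_rw [blIntegrand, fun i => Real.mul_rpow (z := p i) (ha i) (hf i (C i *ᵥ x)),
    Finset.prod_mul_distrib]
  ring

theorem blForm_const_lt_top (h𝒬 : 𝒬.PosDef) (b : Fin m → ℝ) :
    blForm C p 𝒬 (fun i _ => b i) < ⊤ :=
  ((integrable_gaussFn h𝒬).mul_const (∏ i, b i ^ p i)).lintegral_lt_top

theorem tendsto_blForm {ι : Type*} {l : Filter ι} [l.IsCountablyGenerated] (hp : ∀ i, 0 ≤ p i)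
    (h𝒬 : 𝒬.PosDef) {u : ι → ∀ i, (Fin (ni i) → ℝ) → ℝ} {b : Fin m → ℝ}
    (hcont : ∀ t i, Continuous (u t i)) (hnn : ∀ t i y, 0 ≤ u t i y)
    (hb : ∀ t i y, u t i y ≤ b i) (hlim : ∀ i y, Tendsto (fun t => u t i y) l (𝓝 (f i y))) :
    Tendsto (fun t => blForm C p 𝒬 (u t)) l (𝓝 (blForm C p 𝒬 f)) := by
  refine tendsto_lintegral_filter_of_dominated_convergence
    (fun x => ENNReal.ofReal (blIntegrand C p 𝒬 (fun i _ => b i) x))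
    (.of_forall fun t => measurable_ofReal_blIntegrand hp (hcont t))
    (.of_forall fun t => .of_forall fun x =>
      ENNReal.ofReal_le_ofReal (blIntegrand_mono hp (hnn t) (hb t) x))
    (blForm_const_lt_top h𝒬 b).ne (.of_forall fun x => ?_)
  refine (ENNReal.continuous_ofReal.tendsto _).comp (tendsto_const_nhds.mul ?_)
  exact tendsto_finsetProd _ fun i _ => (hlim i _).rpow_const (Or.inr (hp i))

theorem blForm_eq_zero {i : Fin m} (hi : p i ≠ 0) (hf : f i = 0) : blForm C p 𝒬 f = 0 := by
  have hx : ∀ x, blIntegrand C p 𝒬 f x = 0 := fun x => by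
    rw [blIntegrand, Finset.prod_eq_zero (Finset.mem_univ i), mul_zero]
    rw [hf, Pi.zero_apply, Real.zero_rpow hi]
  simp [blForm, hx]

theorem tendsto_blForm_zero {ι : Type*} {l : Filter ι} [l.IsCountablyGenerated]
    (hp : ∀ i, 0 ≤ p i) (h𝒬 : 𝒬.PosDef) {u : ι → ∀ i, (Fin (ni i) → ℝ) → ℝ} {b : Fin m → ℝ}
    (hcont : ∀ t i, Continuous (u t i)) (hnn : ∀ t i y, 0 ≤ u t i y)
    (hb : ∀ t i y, u t i y ≤ b i) {i : Fin m} (hi : p i ≠ 0)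
    (hlim : ∀ y, Tendsto (fun t => u t i y) l (𝓝 0)) :
    Tendsto (fun t => blForm C p 𝒬 (u t)) l (𝓝 0) := by
  let F (v : (Fin (ni i) → ℝ) → ℝ) : ∀ l, (Fin (ni l) → ℝ) → ℝ :=
    Function.update (fun l _ => b l) i v
  have hF (P : ∀ l, ((Fin (ni l) → ℝ) → ℝ) → Prop) {v} (hv : P i v)
      (hP : ∀ l, P l fun _ => b l) : ∀ l, P l (F v l) :=
    (Function.forall_update_iff _ P).2 ⟨hv, fun l _ => hP l⟩
  have hzero : blForm C p 𝒬 (F 0) = 0 := blForm_eq_zero hi (Function.update_self ..)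
  rw [← hzero]
  have hb0 (t) (l) : 0 ≤ b l := (hnn t l 0).trans (hb t l 0)
  have hF_lim : Tendsto (fun t => blForm C p 𝒬 (F (u t i))) l (𝓝 (blForm C p 𝒬 (F 0))) := by
    refine tendsto_blForm hp h𝒬
      (fun t => hF (fun _ v => Continuous v) (hcont t i) fun l => continuous_const)
      (fun t => hF (fun _ v => ∀ y, 0 ≤ v y) (hnn t i) fun l _ => hb0 t l)
      (fun t => hF (fun l v => ∀ y, v y ≤ b l) (hb t i) fun l _ => le_rfl) fun l y => ?_
    rcases eq_or_ne l i with rfl | hl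
    · simpa only [F, Function.update_self, Pi.zero_apply] using hlim y
    · simpa only [F, Function.update_of_ne hl] using tendsto_const_nhds
  refine tendsto_of_tendsto_of_tendsto_of_le_of_le tendsto_const_nhds hF_lim
    (fun t => hzero.trans_le zero_le) fun t => blForm_mono hp (hnn t) ?_
  exact hF (fun l v => ∀ y, u t l y ≤ v y) (fun y => le_rfl) (hb t)

theorem rotProd_blIntegrand (hf : ∀ i y, 0 ≤ f i y) (hg : ∀ i y, 0 ≤ g i y) (x z : Fin n → ℝ) :
    rotProd (blIntegrand C p 𝒬 f) (blIntegrand C p 𝒬 g) x z =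
      gaussFn 𝒬 x * blIntegrand C p 𝒬 (rotTuple C f g x) z := by
  have hprod : ∀ i, rotTuple C f g x i (C i *ᵥ z) ^ p i =
      f i (C i *ᵥ ((√2 : ℝ)⁻¹ • (x + z))) ^ p i * g i (C i *ᵥ ((√2 : ℝ)⁻¹ • (x - z))) ^ p i := by
    intro i
    rw [rotTuple, rotProd, ← mulVec_add, ← mulVec_sub, ← mulVec_smul, ← mulVec_smul,
      Real.mul_rpow (hf i _) (hg i _)]
  have hgauss := rotProd_gaussFn 𝒬 x z
  simp only [rotProd] at hgauss
  simp_rw [rotProd, blIntegrand, hprod, Finset.prod_mul_distrib]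
  linear_combination (∏ i, f i (C i *ᵥ ((√2 : ℝ)⁻¹ • (x + z))) ^ p i) *
    (∏ i, g i (C i *ᵥ ((√2 : ℝ)⁻¹ • (x - z))) ^ p i) * hgauss

theorem blIntegrand_conv (x : Fin n → ℝ) :
    blIntegrand C p 𝒬 (fun i => Conv (f i) (g i)) x =
      gaussFn 𝒬 x * massProd p (rotTuple C f g x) := by
  simp only [blIntegrand, massProd, rotTuple, conv_eq_integral_rotProd]

namespace Admissible

theorem nonneg (hf : Admissible Q f) (i : Fin m) (y : Fin (ni i) → ℝ) : 0 ≤ f i y :=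
  ((hf i).pos y).le

theorem massProd_pos (hf : Admissible Q f) (p : Fin m → ℝ) : 0 < massProd p f :=
  Finset.prod_pos fun i _ => Real.rpow_pos_of_pos (hf i).integral_pos _

theorem blForm_pos (hf : Admissible Q f) (hp : ∀ i, 0 ≤ p i) : 0 < blForm C p 𝒬 f := by
  have hpos : ∀ x, 0 < blIntegrand C p 𝒬 f x := fun x =>
    mul_pos (gaussFn_pos _ _) (Finset.prod_pos fun i _ => Real.rpow_pos_of_pos ((hf i).pos _) _)
  rw [blForm, lintegral_pos_iff_support
    (measurable_ofReal_blIntegrand hp fun i => (hf i).continuous),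
    Function.support_eq_univ fun x => (ENNReal.ofReal_pos.2 (hpos x)).ne']
  exact Measure.measure_univ_pos.2 (NeZero.ne _)

protected theorem rotTuple (hf : Admissible Q f) (hg : Admissible Q g) (x : Fin n → ℝ) :
    Admissible Q (rotTuple C f g x) :=
  fun i => (hf i).rotProd (hg i) _

theorem conv (hf : Admissible Q f) (hg : Admissible Q g) :
    Admissible Q fun i => Conv (f i) (g i) :=
  fun i => (hf i).conv (hg i)

theorem massProd_conv (hf : Admissible Q f) (hg : Admissible Q g) (p : Fin m → ℝ) :
    massProd p (fun i => Conv (f i) (g i)) = massProd p f * massProd p g := by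
  simp_rw [massProd, ← Finset.prod_mul_distrib]
  refine Finset.prod_congr rfl fun i _ => ?_
  rw [integral_conv (hf i).integrable (hg i).integrable,
    Real.mul_rpow (hf i).integral_pos.le (hg i).integral_pos.le]

theorem blForm_mul_blForm (hf : Admissible Q f) (hg : Admissible Q g) (hp : ∀ i, 0 ≤ p i) :
    blForm C p 𝒬 f * blForm C p 𝒬 g =
      ∫⁻ x, ENNReal.ofReal (gaussFn 𝒬 x) * blForm C p 𝒬 (rotTuple C f g x) := by
  rw [blForm, blForm, ← lintegral_lintegral_rotProd
    (continuous_blIntegrand hp fun i => (hf i).continuous).measurable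
    (continuous_blIntegrand hp fun i => (hg i).continuous).measurable
    (blIntegrand_nonneg hf.nonneg)]
  refine lintegral_congr fun x => ?_
  rw [blForm, ← lintegral_const_mul' _ _ ENNReal.ofReal_ne_top]
  refine lintegral_congr fun z => ?_
  rw [rotProd_blIntegrand hf.nonneg hg.nonneg, ENNReal.ofReal_mul (gaussFn_pos _ _).le]

theorem lintegral_const_mul_massProd_rotTuple (hf : Admissible Q f) (hg : Admissible Q g)
    (hp : ∀ i, 0 ≤ p i) (κ : ℝ≥0∞) :
    ∫⁻ x, ENNReal.ofReal (gaussFn 𝒬 x) *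
        (κ * ENNReal.ofReal (massProd p (rotTuple C f g x))) =
      κ * blForm C p 𝒬 (fun i => Conv (f i) (g i)) := by
  rw [blForm, ← lintegral_const_mul _
    (measurable_ofReal_blIntegrand hp fun i => (hf.conv hg i).continuous)]
  refine lintegral_congr fun x => ?_
  rw [blIntegrand_conv, ENNReal.ofReal_mul (gaussFn_pos _ _).le, mul_left_comm]

theorem blForm_le (hf : Admissible Q f) :
    blForm C p 𝒬 f ≤ blSup C p Q 𝒬 * ENNReal.ofReal (massProd p f) := by
  rw [← ENNReal.div_le_iff (ENNReal.ofReal_pos.2 (hf.massProd_pos p)).ne' ENNReal.ofReal_ne_top]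
  exact le_iSup₂_of_le f hf le_rfl

theorem blForm_mul_blForm_le (hf : Admissible Q f) (hg : Admissible Q g) (hp : ∀ i, 0 ≤ p i) :
    blForm C p 𝒬 f * blForm C p 𝒬 g ≤
      blSup C p Q 𝒬 * blForm C p 𝒬 (fun i => Conv (f i) (g i)) := by
  rw [hf.blForm_mul_blForm hg hp, ← hf.lintegral_const_mul_massProd_rotTuple hg hp]
  exact lintegral_mono fun x => mul_le_mul_right (hf.rotTuple hg x).blForm_le _

end Admissible

theorem admissible_gaussFn {B : ∀ i, Matrix (Fin (ni i)) (Fin (ni i)) ℝ}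
    (hB : ∀ i, (B i).PosDef ∧ (Q i - B i).PosSemidef) :
    Admissible Q fun i => gaussFn (B i) :=
  fun i => semiconvexDensity_gaussFn (hB i).2 (integrable_gaussFn (hB i).1)

theorem blSup_lt_top (hp : ∀ i, 0 ≤ p i) (h𝒬 : 𝒬.PosDef) : blSup C p Q 𝒬 < ⊤ := by
  let b : Fin m → ℝ := fun i => (∫ z, gaussFn (Q i) z)⁻¹
  have hb : ∀ i, 0 ≤ b i := fun i => inv_nonneg.2 (integral_nonneg fun z => (gaussFn_pos _ z).le)
  refine lt_of_le_of_lt (iSup₂_le fun f hf => ?_)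
    (blForm_const_lt_top (C := C) (p := p) h𝒬 b)
  rw [ENNReal.div_le_iff (ENNReal.ofReal_pos.2 (hf.massProd_pos p)).ne' ENNReal.ofReal_ne_top,
    mul_comm, massProd, ← blForm_const_mul (fun i => (hf i).integral_pos.le) fun i _ => hb i]
  exact blForm_mono hp hf.nonneg fun i y => (hf i).le_integral_div y

theorem blSup_pos (hQ : ∀ i, (Q i).PosDef) (hp : ∀ i, 0 ≤ p i) : 0 < blSup C p Q 𝒬 := by
  have h : Admissible Q fun i => gaussFn (Q i) :=
    admissible_gaussFn fun i => ⟨hQ i, by rw [sub_self]; exact PosSemidef.zero⟩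
  refine lt_of_lt_of_le ?_ (le_iSup₂_of_le _ h le_rfl)
  exact ENNReal.div_pos (h.blForm_pos hp).ne' ENNReal.ofReal_ne_top

theorem massProd_const_mul {a : Fin m → ℝ} (ha : ∀ i, 0 ≤ a i) (hf : ∀ i, 0 ≤ ∫ y, f i y) :
    massProd p (fun i y => a i * f i y) = (∏ i, a i ^ p i) * massProd p f := by
  simp_rw [massProd, integral_const_mul, ← Finset.prod_mul_distrib]
  exact Finset.prod_congr rfl fun i _ => Real.mul_rpow (ha i) (hf i)

/-- The tuple with each component divided by its integral. -/
def normalizedTuple (f : ∀ i, (Fin (ni i) → ℝ) → ℝ) (i : Fin m) (y : Fin (ni i) → ℝ) : ℝ :=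
  (∫ z, f i z)⁻¹ * f i y

namespace Admissible

protected theorem normalizedTuple (hf : Admissible Q f) : Admissible Q (normalizedTuple f) :=
  fun i => (hf i).const_mul (inv_pos.2 (hf i).integral_pos)

theorem integral_normalizedTuple (hf : Admissible Q f) (i : Fin m) :
    ∫ y, normalizedTuple f i y = 1 := by
  simp_rw [normalizedTuple]
  rw [integral_const_mul, inv_mul_cancel₀ (hf i).integral_pos.ne']

theorem blForm_normalizedTuple (hf : Admissible Q f) :
    blForm C p 𝒬 (normalizedTuple f) = blForm C p 𝒬 f / ENNReal.ofReal (massProd p f) := by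
  have hinv : ∏ i, (∫ y, f i y)⁻¹ ^ p i = (massProd p f)⁻¹ := by
    simp_rw [massProd, ← Finset.prod_inv_distrib,
      fun i => Real.inv_rpow (hf i).integral_pos.le (p i)]
  unfold normalizedTuple
  rw [blForm_const_mul (fun i => (inv_pos.2 (hf i).integral_pos).le) hf.nonneg, hinv,
    ENNReal.ofReal_inv_of_pos (hf.massProd_pos p), mul_comm, div_eq_mul_inv]

end Admissible

-- If `u_i 0` were arbitrarily small, then so would be `u_i y`, since
-- `(u_i y * g_Q y) ^ 2 ≤ u_i (2 y) * u_i 0` and `u_i` is bounded.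
theorem exists_forall_le_apply_zero (hp : ∀ i, 0 ≤ p i) (h𝒬 : 𝒬.PosDef) {κ : ℝ≥0∞} (hκ : κ ≠ 0)
    {i : Fin m} (hi : p i ≠ 0) : ∃ c > 0, ∀ u, Admissible Q u → (∀ l, ∫ y, u l y = 1) →
      κ ≤ blForm C p 𝒬 u → c ≤ u i 0 := by
  by_contra! h
  choose u hu hmass hκu hlt using fun j : ℕ => h (1 / ((j : ℝ) + 1)) Nat.one_div_pos_of_nat
  have hb : ∀ j l y, u j l y ≤ 1 / ∫ z, gaussFn (Q l) z := fun j l y => by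
    simpa only [hmass] using (hu j l).le_integral_div y
  have hzero : Tendsto (fun j => u j i 0) atTop (𝓝 0) :=
    squeeze_zero (fun j => (hu j).nonneg i 0) (fun j => (hlt j).le)
      tendsto_one_div_add_atTop_nhds_zero_nat
  have hsq : ∀ y, Tendsto (fun j => (u j i y * gaussFn (Q i) y) ^ 2) atTop (𝓝 0) := fun y => by
    refine squeeze_zero (fun j => sq_nonneg _) (fun j => ?_)
      ((mul_zero (1 / ∫ z, gaussFn (Q i) z)) ▸ hzero.const_mul (1 / ∫ z, gaussFn (Q i) z))
    refine ((hu j i).sq_mul_gaussFn_le y y).trans ?_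
    rw [sub_self]
    exact mul_le_mul_of_nonneg_right (hb j i _) ((hu j).nonneg i 0)
  have hlim : ∀ y, Tendsto (fun j => u j i y) atTop (𝓝 0) := fun y => by
    have h := (hsq y).sqrt.mul_const (gaussFn (Q i) y)⁻¹
    rw [Real.sqrt_zero, zero_mul] at h
    refine h.congr fun j => ?_
    rw [Real.sqrt_sq (mul_pos ((hu j i).pos y) (gaussFn_pos _ y)).le,
      mul_inv_cancel_right₀ (gaussFn_pos _ y).ne']
  exact hκ (le_zero_iff.1 (ge_of_tendsto' (tendsto_blForm_zero hp h𝒬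
    (fun j l => (hu j l).continuous) (fun j => (hu j).nonneg) hb hi hlim) hκu))

theorem exists_forall_mul_integral_le_apply_zero (hp : ∀ i, 0 < p i) (h𝒬 : 𝒬.PosDef) {κ : ℝ≥0∞}
    (hκ : κ ≠ 0) : ∃ c : Fin m → ℝ, (∀ i, 0 < c i) ∧ ∀ u, Admissible Q u →
      κ * ENNReal.ofReal (massProd p u) ≤ blForm C p 𝒬 u → ∀ i, c i * ∫ y, u i y ≤ u i 0 := by
  choose c hc h using fun i => exists_forall_le_apply_zero (C := C) (Q := Q) (fun i => (hp i).le)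
    h𝒬 hκ (hp i).ne'
  refine ⟨c, hc, fun u hu hκu i => ?_⟩
  rw [← le_inv_mul_iff₀' (hu i).integral_pos]
  refine h i _ hu.normalizedTuple hu.integral_normalizedTuple ?_
  rwa [hu.blForm_normalizedTuple, ENNReal.le_div_iff_mul_le
    (.inl (ENNReal.ofReal_pos.2 (hu.massProd_pos p)).ne') (.inl ENNReal.ofReal_ne_top)]

end Functional

section ConvexCompactness

variable {ι : Type*} {E : Type*} [NormedAddCommGroup E] [NormedSpace ℝ E]

theorem exists_ultrafilter_tendsto_of_convexOn (U : Ultrafilter ι) {φ : ι → E → ℝ} {a b : E → ℝ}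
    (hconv : ∀ j, ConvexOn ℝ Set.univ (φ j)) (hφ : ∀ j z, φ j z ∈ Set.Icc (a z) (b z)) :
    ∃ ψ : E → ℝ, ConvexOn ℝ Set.univ ψ ∧ ∀ z, Tendsto (fun j => φ j z) U (𝓝 (ψ z)) := by
  have h : ∀ z, ∃ l, Tendsto (fun j => φ j z) U (𝓝 l) := fun z => by
    obtain ⟨l, -, hl⟩ := isCompact_Icc.ultrafilter_le_nhds (U.map fun j => φ j z)
      (tendsto_principal.2 (.of_forall fun j => hφ j z))
    exact ⟨l, hl⟩
  choose ψ hψ using h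
  exact ⟨ψ, isClosed_setOfPred_convexOn.mem_of_tendsto (tendsto_pi_nhds.2 hψ)
    (.of_forall hconv), hψ⟩

theorem exists_tendsto_of_convexOn_of_dense [FiniteDimensional ℝ E] {φ : ℕ → E → ℝ} {a b : E → ℝ}
    (hconv : ∀ j, ConvexOn ℝ Set.univ (φ j)) (hφ : ∀ j z, φ j z ∈ Set.Icc (a z) (b z))
    {s : Set E} (hs : Dense s) (hlim : ∀ z ∈ s, ∃ l, Tendsto (fun j => φ j z) atTop (𝓝 l)) :
    ∃ ψ : E → ℝ, ConvexOn ℝ Set.univ ψ ∧ ∀ z, Tendsto (fun j => φ j z) atTop (𝓝 (ψ z)) := by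
  obtain ⟨ψ, hψc, hψ⟩ := exists_ultrafilter_tendsto_of_convexOn (hyperfilter ℕ) hconv hφ
  refine ⟨ψ, hψc, fun z => (tendsto_iff_ultrafilter _ _ _).2 fun U hU => ?_⟩
  obtain ⟨χ, hχc, hχ⟩ := exists_ultrafilter_tendsto_of_convexOn U hconv hφ
  have heq : χ = ψ := by
    refine Continuous.ext_on hs hχc.locallyLipschitz.continuous hψc.locallyLipschitz.continuous
      fun z hz => ?_
    obtain ⟨l, hl⟩ := hlim z hz
    exact (tendsto_nhds_unique (hχ z) (hl.mono_left hU)).trans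
      (tendsto_nhds_unique (hψ z) (hl.mono_left Nat.hyperfilter_le_atTop)).symm
  exact heq ▸ hχ z

theorem exists_subseq_tendsto_of_convexOn [Countable ι] {E : ι → Type*}
    [∀ i, NormedAddCommGroup (E i)] [∀ i, NormedSpace ℝ (E i)] [∀ i, FiniteDimensional ℝ (E i)]
    {φ : ℕ → ∀ i, E i → ℝ} {a b : ∀ i, E i → ℝ} (hconv : ∀ j i, ConvexOn ℝ Set.univ (φ j i))
    (hφ : ∀ j i z, φ j i z ∈ Set.Icc (a i z) (b i z)) :
    ∃ σ : ℕ → ℕ, StrictMono σ ∧ ∃ ψ : ∀ i, E i → ℝ,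
      ∀ i z, Tendsto (fun j => φ (σ j) i z) atTop (𝓝 (ψ i z)) := by
  have (i : ι) : ProperSpace (E i) := FiniteDimensional.proper_real (E i)
  let pt (q : Σ _ : ι, ℕ) : E q.1 := TopologicalSpace.denseSeq _ q.2
  obtain ⟨l, -, σ, hσ, hl⟩ := (isCompact_univ_pi fun q : Σ _ : ι, ℕ =>
    isCompact_Icc (a := a q.1 (pt q)) (b := b q.1 (pt q))).tendsto_subseq
    (x := fun (j : ℕ) (q : Σ _ : ι, ℕ) => φ j q.1 (pt q)) fun j q _ => hφ j q.1 (pt q)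
  have h : ∀ i, ∃ ψ : E i → ℝ, ConvexOn ℝ Set.univ ψ ∧
      ∀ z, Tendsto (fun j => φ (σ j) i z) atTop (𝓝 (ψ z)) := fun i => by
    refine exists_tendsto_of_convexOn_of_dense (fun j => hconv _ i) (fun j => hφ _ i)
      (TopologicalSpace.denseRange_denseSeq (E i)) ?_
    rintro _ ⟨r, rfl⟩
    exact ⟨l ⟨i, r⟩, tendsto_pi_nhds.1 hl ⟨i, r⟩⟩
  choose ψ _ hψ using h
  exact ⟨σ, hσ, ψ, hψ⟩

end ConvexCompactness

section Optimal

variable {n m : ℕ} {ni : Fin m → ℕ} {C : ∀ i, Matrix (Fin (ni i)) (Fin n) ℝ} {p : Fin m → ℝ}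
  {Q : ∀ i, Matrix (Fin (ni i)) (Fin (ni i)) ℝ} {𝒬 : Matrix (Fin n) (Fin n) ℝ}
  {f g : ∀ i, (Fin (ni i) → ℝ) → ℝ}

/-- An admissible tuple attaining the best constant `blSup` over admissible tuples. -/
structure IsOptimal (C : ∀ i, Matrix (Fin (ni i)) (Fin n) ℝ) (p : Fin m → ℝ)
    (Q : ∀ i, Matrix (Fin (ni i)) (Fin (ni i)) ℝ) (𝒬 : Matrix (Fin n) (Fin n) ℝ)
    (f : ∀ i, (Fin (ni i) → ℝ) → ℝ) : Prop where
  admissible : Admissible Q f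
  blForm_eq : blForm C p 𝒬 f = blSup C p Q 𝒬 * ENNReal.ofReal (massProd p f)

theorem Admissible.isOptimal (hf : Admissible Q f)
    (h : blSup C p Q 𝒬 * ENNReal.ofReal (massProd p f) ≤ blForm C p 𝒬 f) : IsOptimal C p Q 𝒬 f :=
  ⟨hf, hf.blForm_le.antisymm h⟩

theorem isOptimal_of_tendsto_of_tendsto_integral (hp : ∀ i, 0 ≤ p i) (h𝒬 : 𝒬.PosDef)
    {u : ℕ → ∀ i, (Fin (ni i) → ℝ) → ℝ} (hu : ∀ j, Admissible Q (u j)) {κ : ℕ → ℝ≥0∞}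
    (hκ : Tendsto κ atTop (𝓝 (blSup C p Q 𝒬)))
    (hκu : ∀ j, κ j * ENNReal.ofReal (massProd p (u j)) ≤ blForm C p 𝒬 (u j))
    (hf : ∀ i y, 0 < f i y) (hlim : ∀ i y, Tendsto (fun j => u j i y) atTop (𝓝 (f i y)))
    {I M : Fin m → ℝ} (hM : ∀ j i, ∫ y, u j i y ≤ M i)
    (hI : ∀ i, Tendsto (fun j => ∫ y, u j i y) atTop (𝓝 (I i))) : IsOptimal C p Q 𝒬 f := by
  have hfI := fun i => SemiconvexDensity.of_tendsto (fun j => hu j i) (hf i) (hlim i) (hI i)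
  have ha : Admissible Q f := fun i => (hfI i).1
  have hmass : Tendsto (fun j => κ j * ENNReal.ofReal (massProd p (u j))) atTop
      (𝓝 (blSup C p Q 𝒬 * ENNReal.ofReal (∏ i, I i ^ p i))) :=
    ENNReal.Tendsto.mul hκ (.inr ENNReal.ofReal_ne_top)
      ((ENNReal.continuous_ofReal.tendsto _).comp
        (tendsto_finsetProd _ fun i _ => (hI i).rpow_const (.inr (hp i))))
      (.inr (blSup_lt_top hp h𝒬).ne)
  have hform : Tendsto (fun j => blForm C p 𝒬 (u j)) atTop (𝓝 (blForm C p 𝒬 f)) :=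
    tendsto_blForm hp h𝒬 (b := fun i => M i / ∫ z, gaussFn (Q i) z)
      (fun j i => (hu j i).continuous) (fun j => (hu j).nonneg)
      (fun j i y => ((hu j i).le_integral_div y).trans (div_le_div_of_nonneg_right (hM j i)
        (integral_nonneg fun z => (gaussFn_pos _ z).le))) hlim
  refine ha.isOptimal (le_trans ?_ (le_of_tendsto_of_tendsto' hmass hform hκu))
  exact mul_le_mul_right (ENNReal.ofReal_le_ofReal (Finset.prod_le_prod
    (fun i _ => Real.rpow_nonneg (ha i).integral_pos.le _) fun i _ =>
    Real.rpow_le_rpow (ha i).integral_pos.le (hfI i).2 (hp i))) _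

theorem isOptimal_of_tendsto (hp : ∀ i, 0 ≤ p i) (h𝒬 : 𝒬.PosDef)
    {u : ℕ → ∀ i, (Fin (ni i) → ℝ) → ℝ} (hu : ∀ j, Admissible Q (u j)) {κ : ℕ → ℝ≥0∞}
    (hκ : Tendsto κ atTop (𝓝 (blSup C p Q 𝒬)))
    (hκu : ∀ j, κ j * ENNReal.ofReal (massProd p (u j)) ≤ blForm C p 𝒬 (u j))
    {M : Fin m → ℝ} (hM : ∀ j i, ∫ y, u j i y ≤ M i)
    (hf : ∀ i y, 0 < f i y) (hlim : ∀ i y, Tendsto (fun j => u j i y) atTop (𝓝 (f i y))) :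
    IsOptimal C p Q 𝒬 f := by
  obtain ⟨I, -, σ, hσ, hI⟩ := (isCompact_univ_pi fun i =>
    isCompact_Icc (a := 0) (b := M i)).tendsto_subseq (x := fun j i => ∫ y, u j i y)
    fun j i _ => ⟨(hu j i).integral_pos.le, hM j i⟩
  exact isOptimal_of_tendsto_of_tendsto_integral hp h𝒬 (fun j => hu (σ j))
    (hκ.comp hσ.tendsto_atTop) (fun j => hκu (σ j)) hf
    (fun i y => (hlim i y).comp hσ.tendsto_atTop) (fun j => hM (σ j)) (tendsto_pi_nhds.1 hI)

theorem exists_normalized_of_lt_blSup {κ : ℝ≥0∞} (hκ : κ < blSup C p Q 𝒬) :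
    ∃ u, Admissible Q u ∧ (∀ i, ∫ y, u i y = 1) ∧
      κ * ENNReal.ofReal (massProd p u) ≤ blForm C p 𝒬 u := by
  simp only [blSup, lt_iSup_iff] at hκ
  obtain ⟨u, hu, hκu⟩ := hκ
  refine ⟨normalizedTuple u, hu.normalizedTuple, hu.integral_normalizedTuple, ?_⟩
  rw [hu.blForm_normalizedTuple, massProd]
  simpa [hu.integral_normalizedTuple] using hκu.le

theorem SemiconvexDensity.logQuot_mem_Icc {k : ℕ} {Q : Matrix (Fin k) (Fin k) ℝ}
    {f : (Fin k → ℝ) → ℝ} (hf : SemiconvexDensity Q f) {b c : ℝ} (hc : 0 < c) (h0 : c ≤ f 0)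
    (hb : ∀ z, f z ≤ b) (z : Fin k → ℝ) :
    logQuot Q f z ∈ Set.Icc (2 * Real.log c - Real.log b - Real.pi * quadForm Q z)
      (Real.log b + Real.pi * quadForm Q z) := by
  have hlog : ∀ z, Real.log (f z) ≤ Real.log b := fun z => Real.log_le_log (hf.pos z) (hb z)
  have hsec := hf.neg_le_secondDiff_log 0 z
  have hlog0 := Real.log_le_log hc h0
  simp only [secondDiff, zero_add, Function.comp_apply] at hsec
  constructor <;> rw [logQuot] <;> linarith [hlog z, hlog (0 - z)]

theorem exists_isOptimal (hQ : ∀ i, (Q i).PosDef) (hp : ∀ i, 0 < p i) (h𝒬 : 𝒬.PosDef) :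
    ∃ f, IsOptimal C p Q 𝒬 f := by
  have hp0 : ∀ i, 0 ≤ p i := fun i => (hp i).le
  obtain ⟨κ, hκmono, hκmem, hκlim⟩ :=
    exists_seq_strictMono_tendsto' (blSup_pos (C := C) (𝒬 := 𝒬) hQ hp0)
  choose u hu hu1 hκu using fun j => exists_normalized_of_lt_blSup (hκmem j).2
  obtain ⟨c, hc, hcu⟩ :=
    exists_forall_mul_integral_le_apply_zero (C := C) (Q := Q) hp h𝒬 (hκmem 0).1.ne'
  have hc0 : ∀ j i, c i ≤ u j i 0 := fun j i => by
    have hκ0 : κ 0 ≤ κ j := hκmono.monotone (Nat.zero_le j)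
    simpa only [hu1, mul_one] using
      hcu (u j) (hu j) ((mul_le_mul_left hκ0 _).trans (hκu j)) i
  have hb : ∀ j i z, u j i z ≤ 1 / ∫ z, gaussFn (Q i) z := fun j i z => by
    simpa only [hu1] using (hu j i).le_integral_div z
  obtain ⟨σ, hσ, ψ, hψ⟩ := exists_subseq_tendsto_of_convexOn
    (fun j i => (hu j i).convexOn_logQuot)
    fun j i => (hu j i).logQuot_mem_Icc (hc i) (hc0 j i) (hb j i)
  refine ⟨fun i z => Real.exp (ψ i z - Real.pi * quadForm (Q i) z),
    isOptimal_of_tendsto hp0 h𝒬 (fun j => hu (σ j)) (hκlim.comp hσ.tendsto_atTop)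
      (fun j => hκu (σ j)) (fun j i => (hu1 (σ j) i).le) (fun i z => Real.exp_pos _)
      fun i z => ?_⟩
  simp_rw [fun j => (hu (σ j) i).eq_exp z]
  exact (Real.continuous_exp.tendsto _).comp ((hψ i z).sub_const _)

namespace Admissible

theorem continuous_massProd_rotTuple (hf : Admissible Q f) (hg : Admissible Q g)
    (hp : ∀ i, 0 ≤ p i) : Continuous fun x => massProd p (rotTuple C f g x) := by
  simp only [massProd, rotTuple, ← conv_eq_integral_rotProd]
  exact continuous_finsetProd _ fun i _ => (((hf.conv hg) i).continuous.comp
    (continuous_const.matrix_mulVec continuous_id)).rpow_const fun x => .inr (hp i)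

theorem continuous_blForm_rotTuple (hf : Admissible Q f) (hg : Admissible Q g)
    (hp : ∀ i, 0 ≤ p i) (h𝒬 : 𝒬.PosDef) :
    Continuous fun x => blForm C p 𝒬 (rotTuple C f g x) := by
  let b (h : ∀ i, (Fin (ni i) → ℝ) → ℝ) (i : Fin m) : ℝ :=
    (∫ z, h i z) / ∫ z, gaussFn (Q i) z
  refine continuous_iff_continuousAt.2 fun x => tendsto_blForm hp h𝒬 (b := fun i => b f i * b g i)
    (fun t i => (hf.rotTuple hg t i).continuous) (fun t => (hf.rotTuple hg t).nonneg)
    (fun t i y => ?_) fun i y => ?_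
  · exact mul_le_mul ((hf i).le_integral_div _) ((hg i).le_integral_div _) ((hg i).pos _).le
      (((hf i).pos 0).le.trans ((hf i).le_integral_div 0))
  · have hfc := (hf i).continuous
    have hgc := (hg i).continuous
    refine Continuous.tendsto ?_ x
    simp only [rotTuple, rotProd]
    fun_prop

end Admissible

namespace IsOptimal

theorem blSup_mul_blSup_mul_massProd_conv (hf : IsOptimal C p Q 𝒬 f) (hg : IsOptimal C p Q 𝒬 g) :
    blSup C p Q 𝒬 * (blSup C p Q 𝒬 * ENNReal.ofReal (massProd p fun i => Conv (f i) (g i))) =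
      blForm C p 𝒬 f * blForm C p 𝒬 g := by
  rw [hf.blForm_eq, hg.blForm_eq, hf.admissible.massProd_conv hg.admissible,
    ENNReal.ofReal_mul (hf.admissible.massProd_pos p).le]
  ring

theorem conv (hf : IsOptimal C p Q 𝒬 f) (hg : IsOptimal C p Q 𝒬 g) (hp : ∀ i, 0 ≤ p i)
    (hfin : blSup C p Q 𝒬 ≠ ⊤) : IsOptimal C p Q 𝒬 fun i => Conv (f i) (g i) := by
  have hpos : blSup C p Q 𝒬 ≠ 0 := fun h => by
    have := hf.admissible.blForm_pos (C := C) (𝒬 := 𝒬) hp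
    simp [hf.blForm_eq, h] at this
  refine (hf.admissible.conv hg.admissible).isOptimal ?_
  rw [← ENNReal.mul_le_mul_iff_right hpos hfin, hf.blSup_mul_blSup_mul_massProd_conv hg]
  exact hf.admissible.blForm_mul_blForm_le hg.admissible hp

-- Integrated against `g_𝒬`, the two sides give `J(f) J(g)` and `K J(Conv f g)`, which are equal.
theorem ae_blForm_rotTuple_eq (hf : IsOptimal C p Q 𝒬 f) (hg : IsOptimal C p Q 𝒬 g)
    (hp : ∀ i, 0 ≤ p i) (hfin : blSup C p Q 𝒬 ≠ ⊤) :
    ∀ᵐ x, blForm C p 𝒬 (rotTuple C f g x) =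
      blSup C p Q 𝒬 * ENNReal.ofReal (massProd p (rotTuple C f g x)) := by
  have ha := hf.admissible
  have hb := hg.admissible
  have hfinite : ∀ {h}, IsOptimal C p Q 𝒬 h → blForm C p 𝒬 h ≠ ⊤ := fun hh => by
    rw [hh.blForm_eq]
    exact ENNReal.mul_ne_top hfin ENNReal.ofReal_ne_top
  have hmeas : Measurable fun x => ENNReal.ofReal (gaussFn 𝒬 x) * (blSup C p Q 𝒬 *
      ENNReal.ofReal (massProd p (rotTuple C f g x))) :=
    (continuous_gaussFn 𝒬).measurable.ennreal_ofReal.mul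
      ((ha.continuous_massProd_rotTuple hb hp).measurable.ennreal_ofReal.const_mul _)
  have hae := ae_eq_of_ae_le_of_lintegral_le (μ := volume)
    (f := fun x => ENNReal.ofReal (gaussFn 𝒬 x) * blForm C p 𝒬 (rotTuple C f g x))
    (.of_forall fun x => mul_le_mul_right (ha.rotTuple hb x).blForm_le _)
    (by rw [← ha.blForm_mul_blForm hb hp]; exact ENNReal.mul_ne_top (hfinite hf) (hfinite hg))
    hmeas.aemeasurable (by
      rw [← ha.blForm_mul_blForm hb hp, ha.lintegral_const_mul_massProd_rotTuple hb hp,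
        ← hf.blSup_mul_blSup_mul_massProd_conv hg]
      exact mul_le_mul_right (ha.conv hb).blForm_le _)
  exact hae.mono fun x hx => (ENNReal.mul_right_inj
    (ENNReal.ofReal_pos.2 (gaussFn_pos 𝒬 x)).ne' ENNReal.ofReal_ne_top).1 hx

protected theorem rotTuple (hf : IsOptimal C p Q 𝒬 f) (hg : IsOptimal C p Q 𝒬 g) (hp : ∀ i, 0 ≤ p i)
    (h𝒬 : 𝒬.PosDef) (x : Fin n → ℝ) : IsOptimal C p Q 𝒬 (rotTuple C f g x) := by
  have hfin : blSup C p Q 𝒬 ≠ ⊤ := (blSup_lt_top hp h𝒬).ne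
  have hmass := hf.admissible.continuous_massProd_rotTuple (C := C) hg.admissible hp
  have hform := hf.admissible.continuous_blForm_rotTuple (C := C) hg.admissible hp h𝒬
  exact ⟨hf.admissible.rotTuple hg.admissible x, congrFun ((hform.ae_eq_iff_eq volume
    ((ENNReal.continuous_const_mul hfin).comp (ENNReal.continuous_ofReal.comp hmass))).1
    (hf.ae_blForm_rotTuple_eq hg hp hfin)) x⟩

end IsOptimal

end Optimal

section ConvexRegularity

variable {E : Type*} [NormedAddCommGroup E] [NormedSpace ℝ E] {φ : E → ℝ} {c : ℝ}

theorem exists_subgradient_of_convexOn (hφ : ConvexOn ℝ Set.univ φ) (hcont : Continuous φ) (x : E) :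
    ∃ D : E →L[ℝ] ℝ, ∀ w, D w ≤ φ (x + w) - φ x := by
  have hconv : Convex ℝ {q : E × ℝ | φ q.1 < q.2} := by simpa using hφ.convex_strict_epigraph
  have hopen : IsOpen {q : E × ℝ | φ q.1 < q.2} :=
    isOpen_lt (hcont.comp continuous_fst) continuous_snd
  obtain ⟨F, hF⟩ := geometric_hahn_banach_open_point hconv hopen (x := (x, φ x)) (by simp)
  have hsplit : ∀ (y : E) (t : ℝ), F (y, t) = F (y, 0) + t * F (0, 1) := fun y t => by
    rw [← smul_eq_mul, ← map_smul, ← map_add]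
    simp
  have hvert : F (0, 1) < 0 := by
    have h := hF (x, φ x + 1) (by simp)
    rw [hsplit x, hsplit x (φ x)] at h
    linarith
  have hgraph : ∀ w, F (w, 0) ≤ (φ (x + w) - φ x) * -F (0, 1) := fun w => by
    refine le_of_forall_pos_lt_add fun ε hε => ?_
    have h := hF (x + w, φ (x + w) + ε / -F (0, 1)) (by simpa using div_pos hε (neg_pos.2 hvert))
    have hadd : F (x + w, 0) = F (x, 0) + F (w, 0) := by
      rw [← map_add]
      simp
    have hcancel : ε / -F (0, 1) * F (0, 1) = -ε := by
      rw [div_neg, neg_mul, div_mul_cancel₀ _ hvert.ne]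
    rw [hsplit (x + w), hsplit x, hadd] at h
    linarith
  refine ⟨(-F (0, 1))⁻¹ • F.comp (.inl ℝ E ℝ), fun w => ?_⟩
  rw [_root_.smul_apply, smul_eq_mul, inv_mul_le_iff₀' (neg_pos.2 hvert)]
  exact hgraph w

theorem sub_le_subgradient_add_sq (hsec : ∀ x w, secondDiff φ x w ≤ c * ‖w‖ ^ 2)
    {x : E} {D : E →L[ℝ] ℝ} (hD : ∀ w, D w ≤ φ (x + w) - φ x) (w : E) :
    φ (x + w) - φ x ≤ D w + c * ‖w‖ ^ 2 := by
  have h := hD (-w)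
  have hs := hsec x w
  rw [map_neg, ← sub_eq_add_neg] at h
  rw [secondDiff] at hs
  linarith

theorem hasFDerivAt_of_subgradient (hsec : ∀ x w, secondDiff φ x w ≤ c * ‖w‖ ^ 2) {x : E}
    {D : E →L[ℝ] ℝ} (hD : ∀ w, D w ≤ φ (x + w) - φ x) : HasFDerivAt φ D x := by
  rw [hasFDerivAt_iff_isLittleO_nhds_zero]
  refine Asymptotics.IsBigO.trans_isLittleO (g := fun w : E => ‖w‖ ^ 2)
    (.of_bound c (.of_forall fun w => ?_)) (Asymptotics.isLittleO_norm_pow_id one_lt_two)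
  rw [Real.norm_of_nonneg (by linarith [hD w]), norm_pow, norm_norm]
  linarith [sub_le_subgradient_add_sq hsec hD w]

theorem opNorm_le_of_le_mul_sq {L : E →L[ℝ] ℝ} {r : ℝ} (hc : 0 ≤ c) (hr : 0 < r)
    (h : ∀ v, L v ≤ c * (‖v‖ + r) ^ 2) : ‖L‖ ≤ 4 * c * r := by
  have hle : ∀ v, L v ≤ 4 * c * r * ‖v‖ := fun v => by
    rcases eq_or_ne v 0 with rfl | hv
    · simp
    have hv := norm_pos_iff.2 hv
    have hscaled := h ((r / ‖v‖) • v)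
    rw [map_smul, norm_smul, Real.norm_of_nonneg (by positivity), div_mul_cancel₀ _ hv.ne',
      smul_eq_mul, div_mul_eq_mul_div, div_le_iff₀ hv] at hscaled
    exact le_of_mul_le_mul_left (by linarith) hr
  refine L.opNorm_le_bound (by positivity) fun v => abs_le.2 ⟨?_, hle v⟩
  simpa [neg_le] using hle (-v)

theorem exists_lipschitzWith_hasFDerivAt_of_convexOn (hφ : ConvexOn ℝ Set.univ φ)
    (hcont : Continuous φ) (hc : 0 ≤ c) (hsec : ∀ x w, secondDiff φ x w ≤ c * ‖w‖ ^ 2) :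
    ∃ D : E → E →L[ℝ] ℝ, (∀ x, HasFDerivAt φ (D x) x) ∧ ∃ K, LipschitzWith K D := by
  choose D hD using exists_subgradient_of_convexOn hφ hcont
  refine ⟨D, fun x => hasFDerivAt_of_subgradient hsec (hD x), (4 * c).toNNReal,
    .of_dist_le_mul fun x y => ?_⟩
  rw [dist_eq_norm, dist_eq_norm, Real.coe_toNNReal _ (by positivity)]
  rcases eq_or_ne x y with rfl | hne
  · simp
  refine opNorm_le_of_le_mul_sq hc (norm_pos_iff.2 (sub_ne_zero.2 hne)) fun v => ?_
  have hx := hD x v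
  have hy := hD y (x - y)
  have hxy := sub_le_subgradient_add_sq hsec (hD y) (v + (x - y))
  rw [show y + (v + (x - y)) = x + v by abel, map_add] at hxy
  rw [add_sub_cancel] at hy
  have hnorm : c * ‖v + (x - y)‖ ^ 2 ≤ c * (‖v‖ + ‖x - y‖) ^ 2 := by
    gcongr
    exact norm_add_le _ _
  rw [_root_.sub_apply]
  linarith

theorem hasDerivAt_secondDiff_smul {D : E → E →L[ℝ] ℝ} (hD : ∀ x, HasFDerivAt φ (D x) x)
    (x w : E) (t : ℝ) : HasDerivAt (fun t : ℝ => secondDiff φ x (t • w))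
      (D (x + t • w) w - D (x - t • w) w) t := by
  have hplus : HasDerivAt (fun t : ℝ => x + t • w) w t := by
    simpa using ((hasDerivAt_id t).smul_const w).const_add x
  have hminus : HasDerivAt (fun t : ℝ => x - t • w) (-w) t := by
    simpa using ((hasDerivAt_id t).smul_const w).const_sub x
  simpa [secondDiff, sub_eq_add_neg] using (((hD _).comp_hasDerivAt t hplus).add
    ((hD _).comp_hasDerivAt t hminus)).sub_const (2 * φ x)

theorem tendsto_secondDiff_div_sq {D : E → E →L[ℝ] ℝ} (hD : ∀ x, HasFDerivAt φ (D x) x)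
    {x : E} {A : E →L[ℝ] E →L[ℝ] ℝ} (hA : HasFDerivAt D A x) (w : E) :
    Tendsto (fun t : ℝ => secondDiff φ x (t • w) / t ^ 2) (𝓝[≠] 0) (𝓝 (A w w)) := by
  have hray (v : E) : HasDerivAt (fun t : ℝ => D (x + t • v)) (A v) 0 :=
    HasFDerivAt.comp_hasDerivAt_of_eq 0 hA
      (by simpa using ((hasDerivAt_id (0 : ℝ)).smul_const v).const_add x) (by simp)
  have hquot : Tendsto (fun t : ℝ => (D (x + t • w) w - D (x - t • w) w) / (2 * t)) (𝓝[≠] 0)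
      (𝓝 (A w w)) := by
    have h := (((hray w).sub (hray (-w))).clm_apply
      (hasDerivAt_const 0 w)).tendsto_slope_zero.div_const 2
    simp only [Pi.sub_apply, _root_.sub_apply, zero_add, zero_smul, add_zero, sub_self, map_zero,
      sub_zero, smul_neg, map_neg, sub_neg_eq_add, ← sub_eq_add_neg, smul_eq_mul,
      _root_.add_apply, _root_.zero_apply, add_self_div_two] at h
    refine h.congr fun t => ?_
    ring
  refine HasDerivAt.lhopital_zero_nhdsNE (.of_forall (hasDerivAt_secondDiff_smul hD x w))
    (.of_forall fun t => by simpa using hasDerivAt_pow 2 t) ?_ ?_ ?_ hquot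
  · filter_upwards [self_mem_nhdsWithin] with t ht
    simpa using ht
  · have h := (hasDerivAt_secondDiff_smul hD x w 0).continuousAt.tendsto
    simp only [secondDiff, zero_smul, add_zero, sub_zero, ← two_mul, sub_self] at h
    exact h.mono_left nhdsWithin_le_nhds
  · simpa using ((continuous_pow 2).tendsto (0 : ℝ)).mono_left (nhdsWithin_le_nhds (s := {0}ᶜ))

end ConvexRegularity

theorem exists_isSymm_quadForm_eq {ι : Type*} [Fintype ι]
    (A : (ι → ℝ) →ₗ[ℝ] (ι → ℝ) →ₗ[ℝ] ℝ) :
    ∃ S : Matrix ι ι ℝ, S.IsSymm ∧ ∀ w, quadForm S w = A w w := by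
  classical
  let T : Matrix ι ι ℝ := LinearMap.toMatrix₂' ℝ A
  have hT : ∀ w, w ⬝ᵥ T *ᵥ w = A w w := fun w => by
    rw [← toLinearMap₂'_apply', toLinearMap₂'_toMatrix']
  refine ⟨(2 : ℝ)⁻¹ • (T + Tᵀ), (isSymm_add_transpose_self T).smul _, fun w => ?_⟩
  have hTt : Tᵀ *ᵥ w ⬝ᵥ w = T *ᵥ w ⬝ᵥ w := by
    rw [mulVec_transpose, ← dotProduct_mulVec, dotProduct_comm]
  rw [quadForm, smul_mulVec, add_mulVec, smul_dotProduct, add_dotProduct, hTt, dotProduct_comm, hT,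
    ← two_mul, smul_eq_mul, inv_mul_cancel_left₀ two_ne_zero]

section Symmetrization

variable {E : Type*} [AddCommGroup E] [Module ℝ E] {f : E → ℝ}

/-- The function `z ↦ f(x + z/√2) f(x - z/√2) / f(x)²`: up to normalization at the origin, the
slice of `f ⊗ f` through `(x, x)` in the second of the two rotated variables. -/
def symmQuot (f : E → ℝ) (x z : E) : ℝ :=
  f (x + (√2 : ℝ)⁻¹ • z) * f (x - (√2 : ℝ)⁻¹ • z) / f x ^ 2

/-- The function `z ↦ f(2^{-j/2} z)^{2^j}`. For even `f` it is the `j`-fold iterate of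
`f ↦ rotProd f f 0`; a normalized even `f` with a Hessian at the origin is driven to a Gaussian. -/
def dilatePow (f : E → ℝ) (j : ℕ) (z : E) : ℝ :=
  f ((√2 : ℝ)⁻¹ ^ j • z) ^ 2 ^ j

theorem symmQuot_zero {x : E} (hx : f x ≠ 0) : symmQuot f x 0 = 1 := by
  rw [symmQuot, smul_zero, add_zero, sub_zero, ← sq, div_self (pow_ne_zero 2 hx)]

theorem symmQuot_neg (f : E → ℝ) (x z : E) : symmQuot f x (-z) = symmQuot f x z := by
  rw [symmQuot, symmQuot, smul_neg, ← sub_eq_add_neg, sub_neg_eq_add, mul_comm]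

theorem symmQuot_eq_exp (hf : ∀ y, 0 < f y) (x z : E) :
    symmQuot f x z = Real.exp (secondDiff (Real.log ∘ f) x ((√2 : ℝ)⁻¹ • z)) := by
  simp only [secondDiff, Function.comp_apply]
  rw [Real.exp_sub, Real.exp_add, mul_comm 2, Real.exp_mul, Real.exp_log (hf _),
    Real.exp_log (hf _), Real.exp_log (hf _), Real.rpow_two, symmQuot]

theorem dilatePow_zero (f : E → ℝ) : dilatePow f 0 = f :=
  funext fun z => by simp [dilatePow]

theorem dilatePow_apply_zero (f : E → ℝ) (j : ℕ) : dilatePow f j 0 = f 0 ^ 2 ^ j := by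
  rw [dilatePow, smul_zero]

theorem dilatePow_smul (f : E → ℝ) (j : ℕ) (z : E) :
    dilatePow f j ((√2 : ℝ) ^ j • z) = f z ^ 2 ^ j := by
  rw [dilatePow, inv_pow, inv_smul_smul₀ (by positivity)]

theorem rotProd_dilatePow (hf : ∀ z, f (-z) = f z) (j : ℕ) :
    rotProd (dilatePow f j) (dilatePow f j) 0 = dilatePow f (j + 1) := by
  funext z
  simp only [rotProd, dilatePow, zero_add, zero_sub, smul_neg, hf, smul_smul]
  rw [pow_succ (√2 : ℝ)⁻¹, pow_succ 2 j, pow_mul, sq]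

theorem tendsto_dilatePow_symmQuot (hf : ∀ y, 0 < f y) {x z : E} {l : ℝ}
    (h : Tendsto (fun t : ℝ => secondDiff (Real.log ∘ f) x (t • z) / t ^ 2) (𝓝[≠] 0)
      (𝓝 (2 * l))) :
    Tendsto (fun j => dilatePow (symmQuot f x) j z) atTop (𝓝 (Real.exp l)) := by
  have hpos : 0 < (√2 : ℝ)⁻¹ := by positivity
  have hlt : (√2 : ℝ)⁻¹ < 1 := inv_lt_one_of_one_lt₀ (Real.lt_sqrt_of_sq_lt (by norm_num))
  have ht : Tendsto (fun j : ℕ => (√2 : ℝ)⁻¹ ^ (j + 1)) atTop (𝓝[≠] 0) :=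
    tendsto_nhdsWithin_iff.2 ⟨(tendsto_add_atTop_iff_nat 1).2
      (tendsto_pow_atTop_nhds_zero_of_lt_one hpos.le hlt), .of_forall fun j => (pow_pos hpos _).ne'⟩
  have hlim := (Real.continuous_exp.tendsto _).comp ((h.comp ht).div_const 2)
  rw [mul_div_cancel_left₀ l two_ne_zero] at hlim
  refine hlim.congr fun j => ?_
  have hsq : ((√2 : ℝ)⁻¹ ^ (j + 1)) ^ 2 = (2 ^ j * 2)⁻¹ := by
    rw [← pow_mul, mul_comm, pow_mul, inv_pow, Real.sq_sqrt zero_le_two, inv_pow, pow_succ]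
  rw [dilatePow, symmQuot_eq_exp hf, ← Real.exp_nat_mul, smul_smul, ← pow_succ',
    Function.comp_apply, Function.comp_apply, hsq, div_inv_eq_mul, ← mul_assoc,
    mul_div_cancel_right₀ _ two_ne_zero, mul_comm]
  push_cast
  rfl

end Symmetrization

section Hessian

theorem ae_comp_linearMap {E F : Type*} [NormedAddCommGroup E] [NormedSpace ℝ E]
    [MeasurableSpace E] [BorelSpace E] [FiniteDimensional ℝ E] [NormedAddCommGroup F]
    [NormedSpace ℝ F] [MeasurableSpace F] [BorelSpace F] (μ : Measure E) [μ.IsAddHaarMeasure]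
    (ν : Measure F) [ν.IsAddHaarMeasure] {L : E →ₗ[ℝ] F} (hL : Function.Surjective L)
    {P : F → Prop} (h : ∀ᵐ y ∂ν, P y) : ∀ᵐ x ∂μ, P (L x) := by
  obtain ⟨t, ht, htm, ht0⟩ := exists_measurable_superset_of_null (ae_iff.1 h)
  filter_upwards [(ae_comp_linearMap_mem_iff L μ ν hL htm.compl).2 (compl_mem_ae_iff.2 ht0)]
    with x hx using of_not_not fun hPx => hx (ht hPx)

namespace SemiconvexDensity

variable {k : ℕ} {Q : Matrix (Fin k) (Fin k) ℝ} {f : (Fin k → ℝ) → ℝ}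

theorem exists_lipschitzWith_hasFDerivAt_logQuot (hf : SemiconvexDensity Q f)
    (hconc : ∀ x w, secondDiff (Real.log ∘ f) x w ≤ 0) :
    ∃ D : (Fin k → ℝ) → (Fin k → ℝ) →L[ℝ] ℝ,
      (∀ x, HasFDerivAt (logQuot Q f) (D x) x) ∧ ∃ K, LipschitzWith K D := by
  obtain ⟨c, hc, hcQ⟩ := exists_quadForm_le Q
  refine exists_lipschitzWith_hasFDerivAt_of_convexOn hf.convexOn_logQuot
    hf.convexOn_logQuot.locallyLipschitz.continuous (c := 2 * Real.pi * c) (by positivity)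
    fun x w => ?_
  rw [secondDiff_logQuot, mul_assoc _ c]
  have := mul_le_mul_of_nonneg_left (hcQ w) Real.two_pi_pos.le
  linarith [hconc x w]

theorem exists_posSemidef_tendsto_secondDiff_log (hf : SemiconvexDensity Q f) (hQ : Q.IsSymm)
    (hconc : ∀ x w, secondDiff (Real.log ∘ f) x w ≤ 0) {D : (Fin k → ℝ) → (Fin k → ℝ) →L[ℝ] ℝ}
    (hD : ∀ x, HasFDerivAt (logQuot Q f) (D x) x) {x : Fin k → ℝ} (hDx : DifferentiableAt ℝ D x) :
    ∃ B : Matrix (Fin k) (Fin k) ℝ, B.PosSemidef ∧ (Q - B).PosSemidef ∧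
      ∀ w, Tendsto (fun t : ℝ => secondDiff (Real.log ∘ f) x (t • w) / t ^ 2) (𝓝[≠] 0)
        (𝓝 (2 * -(Real.pi * quadForm B w))) := by
  obtain ⟨S, hS, hSw⟩ := exists_isSymm_quadForm_eq (fderiv ℝ D x).toLinearMap₁₂
  have hlogQuot : ∀ w, Tendsto (fun t : ℝ => secondDiff (logQuot Q f) x (t • w) / t ^ 2) (𝓝[≠] 0)
      (𝓝 (quadForm S w)) := fun w => by
    rw [hSw]
    exact tendsto_secondDiff_div_sq hD hDx.hasFDerivAt w
  have hquad : ∀ w, quadForm (Q - (2 * Real.pi)⁻¹ • S) w =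
      quadForm Q w - (2 * Real.pi)⁻¹ * quadForm S w := fun w => by
    rw [sub_quadForm, quadForm, quadForm, quadForm, smul_mulVec, smul_dotProduct, smul_eq_mul]
  have hlog : ∀ w, Tendsto (fun t : ℝ => secondDiff (Real.log ∘ f) x (t • w) / t ^ 2) (𝓝[≠] 0)
      (𝓝 (2 * -(Real.pi * quadForm (Q - (2 * Real.pi)⁻¹ • S) w))) := fun w => by
    rw [hquad, show 2 * -(Real.pi * (quadForm Q w - (2 * Real.pi)⁻¹ * quadForm S w)) =
      quadForm S w - 2 * Real.pi * quadForm Q w by field_simp; ring]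
    refine ((hlogQuot w).sub_const _).congr' (eventually_mem_nhdsWithin.mono fun t ht => ?_)
    rw [secondDiff_logQuot, quadForm_smul, sub_eq_iff_eq_add, add_div, mul_left_comm,
      mul_div_cancel_left₀ _ (pow_ne_zero 2 ht)]
  refine ⟨_, posSemidef_of_quadForm_nonneg (hQ.sub (hS.smul _)) fun w => ?_, ?_, hlog⟩
  · have h : 2 * -(Real.pi * quadForm (Q - (2 * Real.pi)⁻¹ • S) w) ≤ 0 :=
      le_of_tendsto' (hlog w) fun t => div_nonpos_of_nonpos_of_nonneg (hconc _ _) (sq_nonneg t)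
    exact nonneg_of_mul_nonneg_right (by linarith) Real.pi_pos
  · rw [sub_sub_cancel]
    exact (posSemidef_of_quadForm_nonneg hS fun w => ge_of_tendsto' (hlogQuot w) fun t =>
      div_nonneg (secondDiff_nonneg hf.convexOn_logQuot x _) (sq_nonneg t)).smul (by positivity)

theorem ae_exists_posSemidef_tendsto_secondDiff_log (hf : SemiconvexDensity Q f) (hQ : Q.IsSymm)
    (hconc : ∀ x w, secondDiff (Real.log ∘ f) x w ≤ 0) :
    ∀ᵐ x, ∃ B : Matrix (Fin k) (Fin k) ℝ, B.PosSemidef ∧ (Q - B).PosSemidef ∧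
      ∀ w, Tendsto (fun t : ℝ => secondDiff (Real.log ∘ f) x (t • w) / t ^ 2) (𝓝[≠] 0)
        (𝓝 (2 * -(Real.pi * quadForm B w))) := by
  obtain ⟨D, hD, K, hK⟩ := hf.exists_lipschitzWith_hasFDerivAt_logQuot hconc
  exact hK.ae_differentiableAt.mono fun x hx =>
    hf.exists_posSemidef_tendsto_secondDiff_log hQ hconc hD hx

end SemiconvexDensity

end Hessian

section GaussianOptimal

variable {n m : ℕ} {ni : Fin m → ℕ} {C : ∀ i, Matrix (Fin (ni i)) (Fin n) ℝ} {p : Fin m → ℝ}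
  {Q : ∀ i, Matrix (Fin (ni i)) (Fin (ni i)) ℝ} {𝒬 : Matrix (Fin n) (Fin n) ℝ}
  {f : ∀ i, (Fin (ni i) → ℝ) → ℝ}

namespace IsOptimal

theorem const_mul (hf : IsOptimal C p Q 𝒬 f) {a : Fin m → ℝ} (ha : ∀ i, 0 < a i) :
    IsOptimal C p Q 𝒬 fun i y => a i * f i y := by
  refine ⟨fun i => (hf.admissible i).const_mul (ha i), ?_⟩
  have ha0 : ∀ i, 0 ≤ a i := fun i => (ha i).le
  rw [blForm_const_mul ha0 hf.admissible.nonneg,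
    massProd_const_mul ha0 fun i => (hf.admissible i).integral_pos.le, hf.blForm_eq,
    ENNReal.ofReal_mul (Finset.prod_nonneg fun i _ => Real.rpow_nonneg (ha0 i) _), mul_left_comm]

protected theorem symmQuot (hf : IsOptimal C p Q 𝒬 f) (hp : ∀ i, 0 ≤ p i) (h𝒬 : 𝒬.PosDef)
    (x : Fin n → ℝ) : IsOptimal C p Q 𝒬 fun i => symmQuot (f i) (C i *ᵥ x) := by
  convert (hf.rotTuple hf hp h𝒬 ((√2 : ℝ) • x)).const_mul
    (a := fun i => (f i (C i *ᵥ x) ^ 2)⁻¹) fun i =>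
    inv_pos.2 (pow_pos ((hf.admissible i).pos _) 2) using 3 with i z
  rw [symmQuot, rotTuple, rotProd, mulVec_smul, smul_add, smul_sub,
    inv_smul_smul₀ (Real.sqrt_pos.2 two_pos).ne', div_eq_inv_mul]

protected theorem dilatePow (hf : IsOptimal C p Q 𝒬 f) (heven : ∀ i z, f i (-z) = f i z)
    (hp : ∀ i, 0 ≤ p i) (h𝒬 : 𝒬.PosDef) (j : ℕ) :
    IsOptimal C p Q 𝒬 fun i => dilatePow (f i) j := by
  induction j with
  | zero => simpa only [dilatePow_zero] using hf
  | succ j ih =>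
    simp only [← rotProd_dilatePow (heven _)]
    convert ih.rotTuple ih hp h𝒬 0 using 2 with i
    rw [rotTuple, mulVec_zero]

-- If `f i z > f i 0`, then `dilatePow (f i) j` has an exploding ratio between its supremum and its
-- value at the origin, whereas for optimal tuples both are comparable to the integral.
theorem le_apply_zero (hf : IsOptimal C p Q 𝒬 f) (heven : ∀ i z, f i (-z) = f i z)
    (hQ : ∀ i, (Q i).PosDef) (hp : ∀ i, 0 < p i) (h𝒬 : 𝒬.PosDef) (i : Fin m)
    (z : Fin (ni i) → ℝ) : f i z ≤ f i 0 := by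
  have hp0 : ∀ i, 0 ≤ p i := fun i => (hp i).le
  have h0 := (hf.admissible i).pos 0
  obtain ⟨c, hc, h⟩ := exists_forall_mul_integral_le_apply_zero (C := C) (Q := Q) hp h𝒬
    (blSup_pos hQ hp0).ne'
  have hbound : ∀ j : ℕ, (f i z / f i 0) ^ 2 ^ j ≤ (c i * ∫ z, gaussFn (Q i) z)⁻¹ := fun j => by
    have hj := hf.dilatePow heven hp0 h𝒬 j
    have hlower := h _ hj.admissible hj.blForm_eq.ge i
    have hupper := (hj.admissible i).le_integral_div ((√2 : ℝ) ^ j • z)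
    rw [dilatePow_apply_zero, ← le_div_iff₀' (hc i)] at hlower
    rw [dilatePow_smul] at hupper
    rw [div_pow, div_le_iff₀ (pow_pos h0 _), _root_.mul_inv_rev, mul_assoc,
      ← div_eq_inv_mul, ← div_eq_inv_mul]
    exact hupper.trans (div_le_div_of_nonneg_right hlower
      (integral_nonneg fun z => (gaussFn_pos _ z).le))
  rw [← div_le_one h0]
  by_contra! hlt
  have hpow : Tendsto (fun j : ℕ => (f i z / f i 0) ^ 2 ^ j) atTop atTop :=
    (tendsto_pow_atTop_atTop_of_one_lt hlt).comp (tendsto_pow_atTop_atTop_of_one_lt one_lt_two)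
  obtain ⟨j, hj⟩ := (hpow.eventually_gt_atTop _).exists
  exact (hbound j).not_gt hj

theorem secondDiff_log_nonpos (hf : IsOptimal C p Q 𝒬 f) (hQ : ∀ i, (Q i).PosDef)
    (hp : ∀ i, 0 < p i) (h𝒬 : 𝒬.PosDef) {i : Fin m} (hC : Function.Surjective (C i).mulVec)
    (x w : Fin (ni i) → ℝ) : secondDiff (Real.log ∘ f i) x w ≤ 0 := by
  obtain ⟨x, rfl⟩ := hC x
  have hpos := (hf.admissible i).pos
  have h := (hf.symmQuot (fun i => (hp i).le) h𝒬 x).le_apply_zero (fun i => symmQuot_neg _ _)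
    hQ hp h𝒬 i ((√2 : ℝ) • w)
  rwa [symmQuot_zero (hpos _).ne', symmQuot_eq_exp hpos, Real.exp_le_one_iff,
    inv_smul_smul₀ (Real.sqrt_pos.2 two_pos).ne'] at h

theorem exists_forall_posSemidef_tendsto (hf : IsOptimal C p Q 𝒬 f) (hQ : ∀ i, (Q i).PosDef)
    (hp : ∀ i, 0 < p i) (h𝒬 : 𝒬.PosDef) (hC : ∀ i, Function.Surjective (C i).mulVec) :
    ∃ x : Fin n → ℝ, ∀ i, ∃ B : Matrix (Fin (ni i)) (Fin (ni i)) ℝ,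
      B.PosSemidef ∧ (Q i - B).PosSemidef ∧
      ∀ z, Tendsto (fun j => dilatePow (symmQuot (f i) (C i *ᵥ x)) j z) atTop
        (𝓝 (gaussFn B z)) := by
  have hQs : ∀ i, (Q i).IsSymm := fun i => isHermitian_iff_isSymm.1 (hQ i).isHermitian
  obtain ⟨x, hx⟩ := (eventually_countable_forall.2 fun i =>
    ae_comp_linearMap volume volume (L := (C i).mulVecLin) (hC i)
      ((hf.admissible i).ae_exists_posSemidef_tendsto_secondDiff_log (hQs i)
        (hf.secondDiff_log_nonpos hQ hp h𝒬 (hC i)))).exists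
  refine ⟨x, fun i => ?_⟩
  obtain ⟨B, hB, hQB, hlim⟩ := hx i
  refine ⟨B, hB, hQB, fun z => ?_⟩
  rw [gaussFn_eq]
  exact tendsto_dilatePow_symmQuot (hf.admissible i).pos (hlim z)

end IsOptimal

theorem exists_isOptimal_gaussFn (hQ : ∀ i, (Q i).PosDef) (hp : ∀ i, 0 < p i) (h𝒬 : 𝒬.PosDef)
    (hC : ∀ i, Function.Surjective (C i).mulVec) :
    ∃ B : ∀ i, Matrix (Fin (ni i)) (Fin (ni i)) ℝ,
      (∀ i, (B i).PosDef ∧ (Q i - B i).PosSemidef) ∧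
      IsOptimal C p Q 𝒬 fun i => gaussFn (B i) := by
  have hp0 : ∀ i, 0 ≤ p i := fun i => (hp i).le
  obtain ⟨f, hf⟩ := exists_isOptimal (C := C) hQ hp h𝒬
  obtain ⟨x, hx⟩ := hf.exists_forall_posSemidef_tendsto hQ hp h𝒬 hC
  choose B hB hQB hlim using hx
  have hu := (hf.symmQuot hp0 h𝒬 x).dilatePow (fun i => symmQuot_neg _ _) hp0 h𝒬
  obtain ⟨c, hc, hcu⟩ := exists_forall_mul_integral_le_apply_zero (C := C) (Q := Q) hp h𝒬
    (blSup_pos hQ hp0).ne'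
  have hmass : ∀ j i, ∫ z, dilatePow (symmQuot (f i) (C i *ᵥ x)) j z ≤ 1 / c i := fun j i => by
    have h := hcu _ (hu j).admissible (hu j).blForm_eq.ge i
    rwa [dilatePow_apply_zero, symmQuot_zero ((hf.admissible i).pos _).ne', one_pow,
      ← le_div_iff₀' (hc i)] at h
  have hopt : IsOptimal C p Q 𝒬 fun i => gaussFn (B i) :=
    isOptimal_of_tendsto hp0 h𝒬 (fun j => (hu j).admissible) tendsto_const_nhds
      (fun j => (hu j).blForm_eq.ge) hmass (fun i => gaussFn_pos (B i)) hlim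
  exact ⟨B, fun i => ⟨posDef_of_integrable_gaussFn (hB i) (hopt.admissible i).integrable, hQB i⟩,
    hopt⟩

end GaussianOptimal

section GaussianConstant

variable {n m : ℕ} {ni : Fin m → ℕ} {C : ∀ i, Matrix (Fin (ni i)) (Fin n) ℝ} {p : Fin m → ℝ}
  {Q B : ∀ i, Matrix (Fin (ni i)) (Fin (ni i)) ℝ} {𝒬 : Matrix (Fin n) (Fin n) ℝ}
  {f : ∀ i, (Fin (ni i) → ℝ) → ℝ}

/-- The exponent matrix `𝒬 + ∑ᵢ pᵢ Cᵢᵀ Bᵢ Cᵢ` of the Brascamp–Lieb integrand of the Gaussian tuple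
`(g_{Bᵢ})`. -/
def blMatrix (C : ∀ i, Matrix (Fin (ni i)) (Fin n) ℝ) (p : Fin m → ℝ)
    (B : ∀ i, Matrix (Fin (ni i)) (Fin (ni i)) ℝ) (𝒬 : Matrix (Fin n) (Fin n) ℝ) :
    Matrix (Fin n) (Fin n) ℝ :=
  𝒬 + ∑ i, p i • ((C i)ᵀ * B i * C i)

theorem quadForm_blMatrix (x : Fin n → ℝ) :
    quadForm (blMatrix C p B 𝒬) x = quadForm 𝒬 x + ∑ i, p i * quadForm (B i) (C i *ᵥ x) := by
  simp only [blMatrix, quadForm, add_mulVec, add_dotProduct, sum_mulVec, sum_dotProduct,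
    smul_mulVec, smul_dotProduct, smul_eq_mul]
  congr! 3 with i
  rw [← mulVec_mulVec, ← mulVec_mulVec, mulVec_transpose, ← dotProduct_mulVec]

theorem blIntegrand_gaussFn :
    blIntegrand C p 𝒬 (fun i => gaussFn (B i)) = gaussFn (blMatrix C p B 𝒬) := by
  funext x
  simp only [blIntegrand, gaussFn_eq, quadForm_blMatrix, ← Real.exp_mul, ← Real.exp_sum,
    ← Real.exp_add]
  congr 1
  rw [mul_add, neg_add, Finset.mul_sum, ← Finset.sum_neg_distrib]
  congr! 2 with i
  ring

theorem posDef_blMatrix (h𝒬 : 𝒬.PosSemidef) (hp : ∀ i, 0 < p i) (hB : ∀ i, (B i).PosDef)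
    (hker : ∀ x : Fin n → ℝ, (∀ i, C i *ᵥ x = 0) → x = 0) : (blMatrix C p B 𝒬).PosDef := by
  have hherm : (blMatrix C p B 𝒬).IsHermitian :=
    h𝒬.isHermitian.add (posSemidef_sum _ fun i _ => by
      simpa only [conjTranspose_eq_transpose_of_trivial] using
        ((hB i).posSemidef.conjTranspose_mul_mul_same (C i)).smul (hp i).le).isHermitian
  refine .of_dotProduct_mulVec_pos hherm fun x hx => ?_
  obtain ⟨i, hi⟩ : ∃ i, C i *ᵥ x ≠ 0 := by
    by_contra! h
    exact hx (hker x h)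
  have hpos : 0 < quadForm (B i) (C i *ᵥ x) := by
    simpa only [quadForm, star_trivial, dotProduct_comm] using (hB i).dotProduct_mulVec_pos hi
  rw [star_trivial, dotProduct_comm, ← quadForm, quadForm_blMatrix]
  exact add_pos_of_nonneg_of_pos (quadForm_nonneg h𝒬 x) (Finset.sum_pos'
    (fun i _ => mul_nonneg (hp i).le (quadForm_nonneg (hB i).posSemidef _))
    ⟨i, Finset.mem_univ i, mul_pos (hp i) hpos⟩)

theorem blForm_gaussFn (hM : (blMatrix C p B 𝒬).PosDef) :
    blForm C p 𝒬 (fun i => gaussFn (B i)) = ENNReal.ofReal (√(blMatrix C p B 𝒬).det)⁻¹ := by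
  rw [blForm, blIntegrand_gaussFn, ← integral_gaussFn hM, ofReal_integral_eq_lintegral_ofReal
    (integrable_gaussFn hM) (.of_forall fun x => (gaussFn_pos _ x).le)]

theorem massProd_gaussFn (hB : ∀ i, (B i).PosDef) :
    massProd p (fun i => gaussFn (B i)) = (√(∏ i, (B i).det ^ p i))⁻¹ := by
  have hdet : ∀ i, 0 ≤ (B i).det := fun i => (hB i).det_pos.le
  rw [massProd, Real.sqrt_prod _ fun i _ => Real.rpow_nonneg (hdet i) _, ← Finset.prod_inv_distrib]
  refine Finset.prod_congr rfl fun i _ => ?_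
  rw [integral_gaussFn (hB i), Real.inv_rpow (Real.sqrt_nonneg _), Real.sqrt_eq_rpow,
    Real.sqrt_eq_rpow, ← Real.rpow_mul (hdet i), ← Real.rpow_mul (hdet i), mul_comm]

theorem ofReal_det_div_rpow (hM : (blMatrix C p B 𝒬).PosDef) (hB : ∀ i, (B i).PosDef) :
    ((∏ i, ENNReal.ofReal (B i).det ^ p i) / ENNReal.ofReal (blMatrix C p B 𝒬).det) ^ (2 : ℝ)⁻¹ =
      ENNReal.ofReal (√(∏ i, (B i).det ^ p i) / √(blMatrix C p B 𝒬).det) := by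
  have hdet : ∀ i, 0 < (B i).det ^ p i := fun i => Real.rpow_pos_of_pos (hB i).det_pos _
  have hprod : 0 < ∏ i, (B i).det ^ p i := Finset.prod_pos fun i _ => hdet i
  simp_rw [ENNReal.ofReal_rpow_of_pos (hB _).det_pos]
  rw [← ENNReal.ofReal_prod_of_nonneg fun i _ => (hdet i).le,
    ← ENNReal.ofReal_div_of_pos hM.det_pos,
    ENNReal.ofReal_rpow_of_pos (div_pos hprod hM.det_pos), ← Real.sqrt_div hprod.le,
    Real.sqrt_eq_rpow, one_div]

theorem blForm_gaussFn_eq_mul_massProd (hM : (blMatrix C p B 𝒬).PosDef) (hB : ∀ i, (B i).PosDef) :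
    blForm C p 𝒬 (fun i => gaussFn (B i)) =
      ((∏ i, ENNReal.ofReal (B i).det ^ p i) /
        ENNReal.ofReal (blMatrix C p B 𝒬).det) ^ (2 : ℝ)⁻¹ *
      ENNReal.ofReal (massProd p fun i => gaussFn (B i)) := by
  have hprod : 0 < √(∏ i, (B i).det ^ p i) :=
    Real.sqrt_pos.2 (Finset.prod_pos fun i _ => Real.rpow_pos_of_pos (hB i).det_pos _)
  rw [blForm_gaussFn hM, massProd_gaussFn hB, ofReal_det_div_rpow hM hB,
    ← ENNReal.ofReal_mul (by positivity), div_mul_eq_mul_div, mul_inv_cancel₀ hprod.ne', one_div]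

theorem blForm_gaussFn_le (h𝒬 : 𝒬.PosSemidef) (hp : ∀ i, 0 < p i)
    (hker : ∀ x : Fin n → ℝ, (∀ i, C i *ᵥ x = 0) → x = 0)
    (hB : ∀ i, (B i).PosDef ∧ (Q i - B i).PosSemidef) :
    blForm C p 𝒬 (fun i => gaussFn (B i)) ≤
      BLconstQ C p Q 𝒬 * ENNReal.ofReal (massProd p fun i => gaussFn (B i)) := by
  have hB' : ∀ i, (B i).PosDef := fun i => (hB i).1
  rw [blForm_gaussFn_eq_mul_massProd (posDef_blMatrix h𝒬 hp hB' hker) hB']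
  refine mul_le_mul_left ?_ _
  rw [BLconstQ]
  exact le_iSup₂_of_le B hB le_rfl

theorem BLconstQ_le_blSup (h𝒬 : 𝒬.PosSemidef) (hp : ∀ i, 0 < p i)
    (hker : ∀ x : Fin n → ℝ, (∀ i, C i *ᵥ x = 0) → x = 0) :
    BLconstQ C p Q 𝒬 ≤ blSup C p Q 𝒬 := by
  refine iSup₂_le fun B hB => ?_
  have hB' : ∀ i, (B i).PosDef := fun i => (hB i).1
  have hg := admissible_gaussFn hB
  have h := hg.blForm_le (C := C) (p := p) (𝒬 := 𝒬)
  rw [blForm_gaussFn_eq_mul_massProd (posDef_blMatrix h𝒬 hp hB' hker) hB'] at h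
  exact (ENNReal.mul_le_mul_iff_left (ENNReal.ofReal_pos.2 (hg.massProd_pos p)).ne'
    ENNReal.ofReal_ne_top).1 h

theorem blForm_add_smul_one_le (hf : ∀ i y, 0 ≤ f i y) {ε : ℝ} (hε : 0 ≤ ε) :
    blForm C p (𝒬 + ε • (1 : Matrix (Fin n) (Fin n) ℝ)) f ≤ blForm C p 𝒬 f :=
  lintegral_mono fun x => ENNReal.ofReal_le_ofReal (mul_le_mul_of_nonneg_right
    (gaussFn_add_smul_one_le 𝒬 hε x) (Finset.prod_nonneg fun i _ => Real.rpow_nonneg (hf i _) _))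

theorem blSup_add_smul_one_le (hQ : ∀ i, (Q i).PosDef) (hp : ∀ i, 0 < p i) (h𝒬 : 𝒬.PosSemidef)
    (hC : ∀ i, Function.Surjective (C i).mulVec)
    (hker : ∀ x : Fin n → ℝ, (∀ i, C i *ᵥ x = 0) → x = 0) {ε : ℝ} (hε : 0 < ε) :
    blSup C p Q (𝒬 + ε • (1 : Matrix (Fin n) (Fin n) ℝ)) ≤ BLconstQ C p Q 𝒬 := by
  obtain ⟨B, hB, hopt⟩ := exists_isOptimal_gaussFn (C := C) hQ hp (posDef_add_smul_one h𝒬 hε) hC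
  rw [← ENNReal.mul_le_mul_iff_left (ENNReal.ofReal_pos.2 (hopt.admissible.massProd_pos p)).ne'
    ENNReal.ofReal_ne_top, ← hopt.blForm_eq]
  exact (blForm_add_smul_one_le hopt.admissible.nonneg hε.le).trans
    (blForm_gaussFn_le h𝒬 hp hker hB)

theorem tendsto_blIntegrand_add_smul_one (x : Fin n → ℝ) :
    Tendsto (fun j : ℕ =>
        blIntegrand C p (𝒬 + (1 / ((j : ℝ) + 1)) • (1 : Matrix (Fin n) (Fin n) ℝ)) f x)
      atTop (𝓝 (blIntegrand C p 𝒬 f x)) := by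
  have hcont : Continuous fun ε : ℝ => gaussFn (𝒬 + ε • (1 : Matrix (Fin n) (Fin n) ℝ)) x := by
    simp only [gaussFn_eq, quadForm_add_smul_one]
    fun_prop
  have hlim := (hcont.tendsto 0).comp tendsto_one_div_add_atTop_nhds_zero_nat
  rw [zero_smul, add_zero] at hlim
  exact hlim.mul_const _

theorem blSup_eq_BLconstQ (hQ : ∀ i, (Q i).PosDef) (hp : ∀ i, 0 < p i) (h𝒬 : 𝒬.PosSemidef)
    (hC : ∀ i, Function.Surjective (C i).mulVec)
    (hker : ∀ x : Fin n → ℝ, (∀ i, C i *ᵥ x = 0) → x = 0) :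
    blSup C p Q 𝒬 = BLconstQ C p Q 𝒬 := by
  refine le_antisymm (iSup₂_le fun f hf => ?_) (BLconstQ_le_blSup h𝒬 hp hker)
  rw [ENNReal.div_le_iff (ENNReal.ofReal_pos.2 (hf.massProd_pos p)).ne' ENNReal.ofReal_ne_top]
  exact lintegral_le_of_tendsto
    (fun j => measurable_ofReal_blIntegrand (fun i => (hp i).le) fun i => (hf i).continuous)
    (fun x => (ENNReal.continuous_ofReal.tendsto _).comp (tendsto_blIntegrand_add_smul_one x))
    (fun j => hf.blForm_le.trans (mul_le_mul_left
      (blSup_add_smul_one_le hQ hp h𝒬 hC hker (by positivity)) _)) tendsto_const_nhds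

theorem Admissible.ofReal_massProd (hf : Admissible Q f) :
    ENNReal.ofReal (massProd p f) = ∏ i, ENNReal.ofReal (∫ y, f i y) ^ p i := by
  rw [massProd, ENNReal.ofReal_prod_of_nonneg fun i _ =>
    Real.rpow_nonneg (hf i).integral_pos.le _]
  simp_rw [ENNReal.ofReal_rpow_of_pos (hf _).integral_pos]

theorem IsExtremizer.isOptimal (hf : IsExtremizer C p Q 𝒬 f)
    (hK : blSup C p Q 𝒬 = BLconstQ C p Q 𝒬) : IsOptimal C p Q 𝒬 f := by
  obtain ⟨hint, hne, hlc, heq⟩ := hf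
  have hadm : Admissible Q f := fun i => .of_moreLogConvex (hlc i) (hint i) (hne i)
  exact ⟨hadm, by rw [hK, hadm.ofReal_massProd]; exact heq⟩

theorem IsOptimal.isExtremizer (hf : IsOptimal C p Q 𝒬 f)
    (hK : blSup C p Q 𝒬 = BLconstQ C p Q 𝒬) : IsExtremizer C p Q 𝒬 f := by
  refine ⟨fun i => (hf.admissible i).integrable, fun i h0 => ?_,
    fun i => (hf.admissible i).moreLogConvex, ?_⟩
  · exact (hf.admissible i).integral_pos.ne' (integral_eq_zero_of_ae h0)
  · rw [← hK, ← hf.admissible.ofReal_massProd]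
    exact hf.blForm_eq

end GaussianConstant

/-- The class of extremizers of a generalized regularized Brascamp–Lieb datum is
closed under the rescaled convolution `Conv`. -/
theorem isExtremizer_conv
    {n m : ℕ} (hm : 1 ≤ m) {ni : Fin m → ℕ}
    (C : ∀ i, Matrix (Fin (ni i)) (Fin n) ℝ)
    (hCsurj : ∀ i, Function.Surjective (C i).mulVec)
    (hker : ∀ x : Fin n → ℝ, (∀ i, (C i).mulVec x = 0) → x = 0)
    (p : Fin m → ℝ) (hp : ∀ i, 0 < p i)
    (Q : ∀ i, Matrix (Fin (ni i)) (Fin (ni i)) ℝ) (hQ : ∀ i, (Q i).PosDef)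
    (𝒬 : Matrix (Fin n) (Fin n) ℝ) (h𝒬 : 𝒬.PosSemidef)
    (hBL : BLconstQ C p Q 𝒬 < ⊤)
    (f g : ∀ i, (Fin (ni i) → ℝ) → ℝ)
    (hf : IsExtremizer C p Q 𝒬 f) (hg : IsExtremizer C p Q 𝒬 g) :
    IsExtremizer C p Q 𝒬 (fun i => Conv (f i) (g i)) ∧
      ∀ i, MoreLogConvex (Conv (f i) (g i)) (Q i) := by
  have hK := blSup_eq_BLconstQ (C := C) hQ hp h𝒬 hCsurj hker
  have hopt : IsOptimal C p Q 𝒬 fun i => Conv (f i) (g i) :=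
    (hf.isOptimal hK).conv (hg.isOptimal hK) (fun i => (hp i).le) (hK ▸ hBL.ne)
  exact ⟨hopt.isExtremizer hK, fun i => (hopt.admissible i).moreLogConvex⟩
end
end

section
/- Let (C,p,Q,𝒬) be a generalized Brascamp–Lieb datum with 𝒬 symmetric positive semidefinite and BL(C,p,Q,𝒬) < +∞. Suppose the tuples (A_j)_{j=1}^m and (A'_j)_{j=1}^m of symmetric matrices with 0 < A_j ≤ Q_j and 0 < A'_j ≤ Q_j both attain the supremum defining BL(C,p,Q,𝒬). Then the tuples (2(A_j^{-1} + A_j'^{-1})^{-1})_{j=1}^m and ((A_j + A'_j)/2)_{j=1}^m also consist of symmetric matrices between 0 and Q_j and attain this supremum. -/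
open MeasureTheory Matrix
open scoped ENNReal

noncomputable section

/-- The value of the Gaussian Brascamp–Lieb functional at a tuple `B`. -/
def BLval {n m : ℕ} {ni : Fin m → ℕ} (C : ∀ i, Matrix (Fin (ni i)) (Fin n) ℝ)
    (p : Fin m → ℝ) (𝒬 : Matrix (Fin n) (Fin n) ℝ)
    (B : ∀ i, Matrix (Fin (ni i)) (Fin (ni i)) ℝ) : ℝ≥0∞ :=
  ((∏ i, ENNReal.ofReal ((B i).det) ^ p i) /
      ENNReal.ofReal ((𝒬 + ∑ i, p i • ((C i)ᵀ * B i * C i)).det)) ^ ((2 : ℝ)⁻¹)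

/-!
Write `M B = 𝒬 + ∑ᵢ pᵢ Cᵢᵀ Bᵢ Cᵢ`. The arithmetic and harmonic means of two positive definite
matrices have the same product of determinants as the matrices themselves. Moreover `M` commutes
with arithmetic means, and `M (harmonicMean A A') ≤ harmonicMean (M A) (M A')` because the harmonic
mean `X` of `A` and `B` satisfies `⟨x, X x⟩ = min {2 (⟨y, A y⟩ + ⟨z, B z⟩) | y + z = x}`. Hence the
product of the values of the Gaussian functional at the two means is at least the product of its
values at `A` and `A'`; if the latter are maximal, all four values agree.
-/

section HarmonicMean

variable {ι R : Type*} [Fintype ι] [DecidableEq ι]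

/-- The arithmetic mean of two square matrices over a field. It is an `abbrev` so that it is
interchangeable with the displayed formula. -/
abbrev arithmeticMean [Field R] (A B : Matrix ι ι R) : Matrix ι ι R :=
  (2 : R)⁻¹ • (A + B)

/-- The harmonic mean of two square matrices: twice their parallel sum `(A⁻¹ + B⁻¹)⁻¹`. It is an
`abbrev` so that it is interchangeable with the displayed formula. -/
abbrev harmonicMean [CommRing R] (A B : Matrix ι ι R) : Matrix ι ι R :=
  (2 : R) • (A⁻¹ + B⁻¹)⁻¹

theorem det_arithmeticMean_mul_det_harmonicMean [Field R] [NeZero (2 : R)] {A B : Matrix ι ι R}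
    (hA : IsUnit A) (hB : IsUnit B) (hAB : IsUnit (A + B)) :
    (arithmeticMean A B).det * (harmonicMean A B).det = A.det * B.det := by
  have hA0 : A.det ≠ 0 := ((isUnit_iff_isUnit_det A).mp hA).ne_zero
  have hB0 : B.det ≠ 0 := ((isUnit_iff_isUnit_det B).mp hB).ne_zero
  have hAB0 : (A + B).det ≠ 0 := ((isUnit_iff_isUnit_det (A + B)).mp hAB).ne_zero
  rw [arithmeticMean, harmonicMean, Matrix.inv_add_inv (iff_of_true hA hB), det_smul, det_smul]
  simp only [det_nonsing_inv, det_mul, Ring.inverse_eq_inv', inv_pow]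
  field_simp

variable {A B : Matrix ι ι R}

theorem isUnit_inv_add_inv [CommRing R] (hA : IsUnit A) (hB : IsUnit B) (hAB : IsUnit (A + B)) :
    IsUnit (A⁻¹ + B⁻¹) := by
  rw [Matrix.inv_add_inv (iff_of_true hA hB)]
  exact ((isUnit_nonsing_inv_iff.mpr hA).mul hAB).mul (isUnit_nonsing_inv_iff.mpr hB)

theorem mulVec_inv_mulVec [CommRing R] (hA : IsUnit A) (x : ι → R) : A *ᵥ (A⁻¹ *ᵥ x) = x := by
  rw [mulVec_mulVec, mul_nonsing_inv A ((isUnit_iff_isUnit_det A).mp hA), one_mulVec]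

theorem star_dotProduct_mulVec_add_star_dotProduct_mulVec [CommRing R] [StarRing R]
    (hA : A.IsHermitian) (hB : B.IsHermitian) (hAu : IsUnit A) (hBu : IsUnit B)
    (hABu : IsUnit (A + B)) (y z : ι → R) :
    star y ⬝ᵥ A *ᵥ y + star z ⬝ᵥ B *ᵥ z =
      star (y + z) ⬝ᵥ (A⁻¹ + B⁻¹)⁻¹ *ᵥ (y + z) +
        star (A *ᵥ y - B *ᵥ z) ⬝ᵥ (A + B)⁻¹ *ᵥ (A *ᵥ y - B *ᵥ z) := by
  set u := (A⁻¹ + B⁻¹)⁻¹ *ᵥ (y + z) with hu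
  obtain ⟨d, hd⟩ : ∃ d, d = y - A⁻¹ *ᵥ u := ⟨_, rfl⟩
  have hsum : A⁻¹ *ᵥ u + B⁻¹ *ᵥ u = y + z := by
    rw [← add_mulVec, hu, mulVec_inv_mulVec (isUnit_inv_add_inv hAu hBu hABu)]
  have hd' : d = B⁻¹ *ᵥ u - z := by
    rw [hd, sub_eq_sub_iff_add_eq_add, add_comm (B⁻¹ *ᵥ u), hsum]
  have hAd : A *ᵥ d = A *ᵥ y - u := by rw [hd, mulVec_sub, mulVec_inv_mulVec hAu]
  have hBd : B *ᵥ d = u - B *ᵥ z := by rw [hd', mulVec_sub, mulVec_inv_mulVec hBu]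
  have hABd : (A + B)⁻¹ *ᵥ (A *ᵥ y - B *ᵥ z) = d := by
    rw [← sub_add_sub_cancel _ u, ← hAd, ← hBd, ← add_mulVec, mulVec_mulVec,
      nonsing_inv_mul _ ((isUnit_iff_isUnit_det _).mp hABu), one_mulVec]
  have hstar {M : Matrix ι ι R} (hM : M.IsHermitian) (x : ι → R) :
      star (M *ᵥ x) ⬝ᵥ d = star x ⬝ᵥ M *ᵥ d := by
    rw [star_mulVec, hM.eq, ← dotProduct_mulVec]
  rw [hABd, star_sub, sub_dotProduct, hstar hA, hstar hB, hAd, hBd]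
  simp only [star_add, add_dotProduct, dotProduct_sub]
  ring

end HarmonicMean

section Loewner

open scoped MatrixOrder ComplexOrder

variable {ι 𝕜 : Type*} [RCLike 𝕜] {A B X : Matrix ι ι 𝕜}

theorem posDef_arithmeticMean (hA : A.PosDef) (hB : B.PosDef) : (arithmeticMean A B).PosDef :=
  (hA.add hB).smul (inv_pos.mpr two_pos)

variable [Fintype ι]

theorem star_dotProduct_mulVec_add_le (hX : X.PosSemidef) (y z : ι → 𝕜) :
    star (y + z) ⬝ᵥ X *ᵥ (y + z) ≤ 2 * (star y ⬝ᵥ X *ᵥ y + star z ⬝ᵥ X *ᵥ z) := by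
  refine sub_nonneg.mp ((hX.dotProduct_mulVec_nonneg (y - z)).trans_eq ?_)
  simp only [star_add, star_sub, mulVec_add, mulVec_sub, dotProduct_add, dotProduct_sub,
    add_dotProduct, sub_dotProduct]
  ring

variable [DecidableEq ι]

theorem one_le_det_of_one_le (hX : 1 ≤ X) : 1 ≤ X.det := by
  have hXsa : X.IsHermitian := (zero_le_one.trans hX).posSemidef.isHermitian
  have hspec : ∀ x ∈ spectrum ℝ X, 1 ≤ x := (CFC.one_le_iff X hXsa).mp hX
  rw [hXsa.det_eq_prod_eigenvalues]
  exact Finset.one_le_prod fun i _ => by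
    exact_mod_cast hspec _ (hXsa.eigenvalues_mem_spectrum_real i)

-- The L² operator norm is only used to write `X` as `star E * E` via the C⋆-algebra structure.
open scoped Matrix.Norms.L2Operator in
theorem monotoneOn_det : MonotoneOn (det : Matrix ι ι 𝕜 → 𝕜) (Set.Ici 0) := by
  intro X hX Y hY hXY
  rcases eq_or_ne X.det 0 with hX0 | hX0
  · rw [hX0]
    exact (nonneg_iff_posSemidef.mp hY).det_nonneg
  obtain ⟨E, hE⟩ := CStarAlgebra.nonneg_iff_eq_star_mul_self.mp (Set.mem_Ici.mp hX)
  have hEu : IsUnit E.det := by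
    rw [hE, det_mul] at hX0
    exact (right_ne_zero_of_mul hX0).isUnit
  have hone : star E⁻¹ * X * E⁻¹ = 1 := by
    rw [hE, ← mul_assoc, ← star_mul, mul_nonsing_inv E hEu, star_one, one_mul,
      mul_nonsing_inv E hEu]
  have hdet_one : (star E⁻¹).det * X.det * E⁻¹.det = 1 := by
    rw [← det_mul, ← det_mul, hone, det_one]
  calc X.det ≤ X.det * (star E⁻¹ * Y * E⁻¹).det :=
        le_mul_of_one_le_right (nonneg_iff_posSemidef.mp hX).det_nonneg <|
          one_le_det_of_one_le (hone ▸ star_left_conjugate_le_conjugate hXY E⁻¹)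
    _ = (star E⁻¹).det * X.det * E⁻¹.det * Y.det := by rw [det_mul, det_mul]; ring
    _ = Y.det := by rw [hdet_one, one_mul]

theorem posDef_harmonicMean (hA : A.PosDef) (hB : B.PosDef) : (harmonicMean A B).PosDef :=
  (hA.inv.add hB.inv).inv.smul two_pos

theorem star_dotProduct_harmonicMean_mulVec_le (hA : A.PosDef) (hB : B.PosDef) (y z : ι → 𝕜) :
    star (y + z) ⬝ᵥ harmonicMean A B *ᵥ (y + z) ≤
      2 * (star y ⬝ᵥ A *ᵥ y + star z ⬝ᵥ B *ᵥ z) := by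
  rw [star_dotProduct_mulVec_add_star_dotProduct_mulVec hA.isHermitian hB.isHermitian hA.isUnit
    hB.isUnit (hA.add hB).isUnit, smul_mulVec, dotProduct_smul, smul_eq_mul]
  gcongr
  exact le_add_of_nonneg_right ((hA.add hB).inv.posSemidef.dotProduct_mulVec_nonneg _)

theorem le_harmonicMean_iff (hA : A.PosDef) (hB : B.PosDef) (hX : X.IsHermitian) :
    X ≤ harmonicMean A B ↔ ∀ y z : ι → 𝕜,
      star (y + z) ⬝ᵥ X *ᵥ (y + z) ≤ 2 * (star y ⬝ᵥ A *ᵥ y + star z ⬝ᵥ B *ᵥ z) := by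
  rw [le_iff, posSemidef_iff_dotProduct_mulVec]
  simp only [(posDef_harmonicMean hA hB).isHermitian.sub hX, true_and, sub_mulVec, dotProduct_sub,
    sub_nonneg]
  refine ⟨fun h y z => (h _).trans (star_dotProduct_harmonicMean_mulVec_le hA hB y z),
    fun h x => ?_⟩
  -- The minimum over `y + z = x` is attained where `A *ᵥ y = B *ᵥ z`; `u` is this common value.
  set u := (A⁻¹ + B⁻¹)⁻¹ *ᵥ x with hu
  have hx : A⁻¹ *ᵥ u + B⁻¹ *ᵥ u = x := by
    rw [← add_mulVec, hu, mulVec_inv_mulVec (hA.inv.add hB.inv).isUnit]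
  have hmin := h (A⁻¹ *ᵥ u) (B⁻¹ *ᵥ u)
  rwa [star_dotProduct_mulVec_add_star_dotProduct_mulVec hA.isHermitian hB.isHermitian hA.isUnit
    hB.isUnit (hA.add hB).isUnit, mulVec_inv_mulVec hA.isUnit, mulVec_inv_mulVec hB.isUnit,
    sub_self, mulVec_zero, dotProduct_zero, add_zero, hx, ← smul_eq_mul, ← dotProduct_smul,
    ← smul_mulVec] at hmin

theorem harmonicMean_le_arithmeticMean (hA : A.PosDef) (hB : B.PosDef) :
    harmonicMean A B ≤ arithmeticMean A B := by
  refine le_iff.mpr (.of_dotProduct_mulVec_nonneg ((posDef_arithmeticMean hA hB).isHermitian.sub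
    (posDef_harmonicMean hA hB).isHermitian) fun x => ?_)
  have h := star_dotProduct_harmonicMean_mulVec_le hA hB ((2 : 𝕜)⁻¹ • x) ((2 : 𝕜)⁻¹ • x)
  have hx : (2 : 𝕜)⁻¹ • x + (2 : 𝕜)⁻¹ • x = x := by module
  rw [hx] at h
  rw [sub_mulVec, dotProduct_sub, sub_nonneg]
  refine h.trans_eq ?_
  simp only [arithmeticMean, star_smul, star_inv₀, star_ofNat, smul_dotProduct, mulVec_smul,
    dotProduct_smul, smul_mulVec, add_mulVec, dotProduct_add, smul_eq_mul]
  field_simp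

end Loewner

section BrascampLieb

open scoped MatrixOrder

variable {n m : ℕ} {ni : Fin m → ℕ} {C : ∀ i, Matrix (Fin (ni i)) (Fin n) ℝ} {p : Fin m → ℝ}
  {Q : ∀ i, Matrix (Fin (ni i)) (Fin (ni i)) ℝ} {𝒬 : Matrix (Fin n) (Fin n) ℝ}
  {A A' B : ∀ i, Matrix (Fin (ni i)) (Fin (ni i)) ℝ}

/-- The tuples over which the supremum `BLconstQ` runs. -/
def IsBLAdmissible (Q B : ∀ i, Matrix (Fin (ni i)) (Fin (ni i)) ℝ) : Prop :=
  ∀ i, (B i).PosDef ∧ B i ≤ Q i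

theorem IsBLAdmissible.arithmeticMean (hA : IsBLAdmissible Q A) (hA' : IsBLAdmissible Q A') :
    IsBLAdmissible Q fun i => arithmeticMean (A i) (A' i) := fun i =>
  ⟨posDef_arithmeticMean (hA i).1 (hA' i).1,
    calc (2 : ℝ)⁻¹ • (A i + A' i) ≤ (2 : ℝ)⁻¹ • (Q i + Q i) :=
          smul_le_smul_of_nonneg_left (add_le_add (hA i).2 (hA' i).2) (by norm_num)
      _ = Q i := by module⟩

theorem IsBLAdmissible.harmonicMean (hA : IsBLAdmissible Q A) (hA' : IsBLAdmissible Q A') :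
    IsBLAdmissible Q fun i => harmonicMean (A i) (A' i) := fun i =>
  ⟨posDef_harmonicMean (hA i).1 (hA' i).1,
    (harmonicMean_le_arithmeticMean (hA i).1 (hA' i).1).trans (hA.arithmeticMean hA' i).2⟩

theorem IsBLAdmissible.BLval_le_BLconstQ (hB : IsBLAdmissible Q B) :
    BLval C p 𝒬 B ≤ BLconstQ C p Q 𝒬 :=
  le_iSup₂ (f := fun B (_ : IsBLAdmissible Q B) => BLval C p 𝒬 B) B hB

variable (C p 𝒬) in
/-- The matrix `𝒬 + ∑ᵢ pᵢ Cᵢᵀ Bᵢ Cᵢ` whose determinant is the denominator of the Gaussian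
Brascamp–Lieb functional. -/
def BLmatrix (B : ∀ i, Matrix (Fin (ni i)) (Fin (ni i)) ℝ) : Matrix (Fin n) (Fin n) ℝ :=
  𝒬 + ∑ i, p i • ((C i)ᵀ * B i * C i)

theorem dotProduct_BLmatrix_mulVec (x : Fin n → ℝ) :
    x ⬝ᵥ BLmatrix C p 𝒬 B *ᵥ x =
      x ⬝ᵥ 𝒬 *ᵥ x + ∑ i, p i * ((C i *ᵥ x) ⬝ᵥ B i *ᵥ (C i *ᵥ x)) := by
  simp only [BLmatrix, add_mulVec, dotProduct_add, sum_mulVec, dotProduct_sum, smul_mulVec,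
    dotProduct_smul, smul_eq_mul, ← mulVec_mulVec, dotProduct_mulVec x (C _)ᵀ, vecMul_transpose]

theorem posSemidef_BLmatrix (hp : ∀ i, 0 ≤ p i) (h𝒬 : 𝒬.PosSemidef)
    (hB : ∀ i, (B i).PosSemidef) : (BLmatrix C p 𝒬 B).PosSemidef :=
  h𝒬.add <| posSemidef_sum Finset.univ fun i _ =>
    ((hB i).conjTranspose_mul_mul_same (C i)).smul (hp i)

theorem BLval_eq (B : ∀ i, Matrix (Fin (ni i)) (Fin (ni i)) ℝ) :
    BLval C p 𝒬 B = ((∏ i, ENNReal.ofReal (B i).det ^ p i) /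
      ENNReal.ofReal (BLmatrix C p 𝒬 B).det) ^ (2 : ℝ)⁻¹ := rfl

theorem posDef_BLmatrix_of_BLval_ne_top (hp : ∀ i, 0 ≤ p i) (h𝒬 : 𝒬.PosSemidef)
    (hB : ∀ i, (B i).PosDef) (hfin : BLval C p 𝒬 B ≠ ⊤) : (BLmatrix C p 𝒬 B).PosDef := by
  refine (posSemidef_BLmatrix hp h𝒬 fun i => (hB i).posSemidef).posDef_iff_det_ne_zero.mpr
    fun hdet => hfin ?_
  have hnum : ∏ i, ENNReal.ofReal (B i).det ^ p i ≠ 0 := Finset.prod_ne_zero_iff.mpr fun i _ =>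
    (ENNReal.rpow_pos (ENNReal.ofReal_pos.mpr (hB i).det_pos) ENNReal.ofReal_ne_top).ne'
  -- In `ℝ≥0∞`, a nonzero numerator over a zero determinant gives `⊤`, not the junk value `0`.
  rw [BLval_eq, hdet, ENNReal.ofReal_zero, ENNReal.div_zero hnum,
    ENNReal.top_rpow_of_pos (by norm_num)]

theorem IsBLAdmissible.posDef_BLmatrix (hB : IsBLAdmissible Q B) (hp : ∀ i, 0 ≤ p i)
    (h𝒬 : 𝒬.PosSemidef) (hBL : BLconstQ C p Q 𝒬 < ⊤) : (BLmatrix C p 𝒬 B).PosDef :=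
  posDef_BLmatrix_of_BLval_ne_top hp h𝒬 (fun i => (hB i).1) (hB.BLval_le_BLconstQ.trans_lt hBL).ne

theorem BLmatrix_arithmeticMean :
    BLmatrix C p 𝒬 (fun i => arithmeticMean (A i) (A' i)) =
      arithmeticMean (BLmatrix C p 𝒬 A) (BLmatrix C p 𝒬 A') := by
  have hterm (i : Fin m) : p i • ((C i)ᵀ * arithmeticMean (A i) (A' i) * C i) =
      (2 : ℝ)⁻¹ • (p i • ((C i)ᵀ * A i * C i) + p i • ((C i)ᵀ * A' i * C i)) := by
    rw [Matrix.mul_smul, Matrix.smul_mul, Matrix.mul_add, Matrix.add_mul, ← smul_add, smul_comm]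
  simp only [BLmatrix, hterm, ← Finset.smul_sum, Finset.sum_add_distrib]
  module

theorem BLmatrix_harmonicMean_le (hp : ∀ i, 0 ≤ p i) (h𝒬 : 𝒬.PosSemidef)
    (hA : ∀ i, (A i).PosDef) (hA' : ∀ i, (A' i).PosDef) (hM : (BLmatrix C p 𝒬 A).PosDef)
    (hM' : (BLmatrix C p 𝒬 A').PosDef) :
    BLmatrix C p 𝒬 (fun i => harmonicMean (A i) (A' i)) ≤
      harmonicMean (BLmatrix C p 𝒬 A) (BLmatrix C p 𝒬 A') := by
  have hH := posSemidef_BLmatrix (C := C) hp h𝒬 fun i =>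
    (posDef_harmonicMean (hA i) (hA' i)).posSemidef
  refine (le_harmonicMean_iff hM hM' hH.isHermitian).mpr fun y z => ?_
  simp only [star_trivial, dotProduct_BLmatrix_mulVec, mulVec_add (C _)]
  calc (y + z) ⬝ᵥ 𝒬 *ᵥ (y + z) + ∑ i, p i * ((C i *ᵥ y + C i *ᵥ z) ⬝ᵥ
        harmonicMean (A i) (A' i) *ᵥ (C i *ᵥ y + C i *ᵥ z))
      ≤ 2 * (y ⬝ᵥ 𝒬 *ᵥ y + z ⬝ᵥ 𝒬 *ᵥ z) +
        ∑ i, p i * (2 * ((C i *ᵥ y) ⬝ᵥ A i *ᵥ (C i *ᵥ y) +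
          (C i *ᵥ z) ⬝ᵥ A' i *ᵥ (C i *ᵥ z))) := by
        gcongr with i
        · exact star_dotProduct_mulVec_add_le h𝒬 y z
        · exact hp i
        · exact star_dotProduct_harmonicMean_mulVec_le (hA i) (hA' i) (C i *ᵥ y) (C i *ᵥ z)
    _ = _ := by
        simp only [mul_add, Finset.sum_add_distrib, Finset.mul_sum, mul_left_comm]
        ring

theorem det_BLmatrix_means_mul_le (hp : ∀ i, 0 ≤ p i) (h𝒬 : 𝒬.PosSemidef)
    (hA : ∀ i, (A i).PosDef) (hA' : ∀ i, (A' i).PosDef) (hM : (BLmatrix C p 𝒬 A).PosDef)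
    (hM' : (BLmatrix C p 𝒬 A').PosDef) :
    (BLmatrix C p 𝒬 fun i => arithmeticMean (A i) (A' i)).det *
        (BLmatrix C p 𝒬 fun i => harmonicMean (A i) (A' i)).det ≤
      (BLmatrix C p 𝒬 A).det * (BLmatrix C p 𝒬 A').det := by
  rw [← det_arithmeticMean_mul_det_harmonicMean hM.isUnit hM'.isUnit (hM.add hM').isUnit,
    BLmatrix_arithmeticMean]
  have hH := posSemidef_BLmatrix (C := C) hp h𝒬 fun i =>
    (posDef_harmonicMean (hA i) (hA' i)).posSemidef
  exact mul_le_mul_of_nonneg_left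
    (monotoneOn_det hH.nonneg (posDef_harmonicMean hM hM').posSemidef.nonneg
      (BLmatrix_harmonicMean_le hp h𝒬 hA hA' hM hM'))
    (posDef_arithmeticMean hM hM').det_pos.le

theorem prod_det_rpow_means_mul (hA : ∀ i, (A i).PosDef) (hA' : ∀ i, (A' i).PosDef) :
    (∏ i, (arithmeticMean (A i) (A' i)).det ^ p i) * ∏ i, (harmonicMean (A i) (A' i)).det ^ p i =
      (∏ i, (A i).det ^ p i) * ∏ i, (A' i).det ^ p i := by
  simp only [← Finset.prod_mul_distrib]
  refine Finset.prod_congr rfl fun i _ => ?_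
  rw [← Real.mul_rpow (posDef_arithmeticMean (hA i) (hA' i)).det_pos.le
      (posDef_harmonicMean (hA i) (hA' i)).det_pos.le,
    ← Real.mul_rpow (hA i).det_pos.le (hA' i).det_pos.le,
    det_arithmeticMean_mul_det_harmonicMean (hA i).isUnit (hA' i).isUnit
      ((hA i).add (hA' i)).isUnit]

theorem toReal_BLval (hB : ∀ i, 0 ≤ (B i).det) (hM : 0 ≤ (BLmatrix C p 𝒬 B).det) :
    (BLval C p 𝒬 B).toReal = √((∏ i, (B i).det ^ p i) / (BLmatrix C p 𝒬 B).det) := by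
  simp only [BLval_eq, ← ENNReal.toReal_rpow, ENNReal.toReal_div, ENNReal.toReal_prod,
    ENNReal.toReal_ofReal (hB _), ENNReal.toReal_ofReal hM,
    Real.sqrt_eq_rpow, one_div]

theorem toReal_BLval_pos (hB : ∀ i, (B i).PosDef) (hM : (BLmatrix C p 𝒬 B).PosDef) :
    0 < (BLval C p 𝒬 B).toReal := by
  rw [toReal_BLval (fun i => (hB i).det_pos.le) hM.det_pos.le]
  exact Real.sqrt_pos.mpr <|
    div_pos (Finset.prod_pos fun i _ => Real.rpow_pos_of_pos (hB i).det_pos _) hM.det_pos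

theorem toReal_BLval_mul_le_means (hp : ∀ i, 0 ≤ p i) (h𝒬 : 𝒬.PosSemidef)
    (hBL : BLconstQ C p Q 𝒬 < ⊤) (hA : IsBLAdmissible Q A) (hA' : IsBLAdmissible Q A') :
    (BLval C p 𝒬 A).toReal * (BLval C p 𝒬 A').toReal ≤
      (BLval C p 𝒬 fun i => arithmeticMean (A i) (A' i)).toReal *
        (BLval C p 𝒬 fun i => harmonicMean (A i) (A' i)).toReal := by
  have hpos {B} (hB : IsBLAdmissible Q B) i := (hB i).1
  have hM {B} (hB : IsBLAdmissible Q B) := hB.posDef_BLmatrix hp h𝒬 hBL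
  have hAr := hA.arithmeticMean hA'
  have hHa := hA.harmonicMean hA'
  have hnum {B} (hB : IsBLAdmissible Q B) : 0 ≤ ∏ i, (B i).det ^ p i :=
    Finset.prod_nonneg fun i _ => Real.rpow_nonneg (hB i).1.det_pos.le _
  have hquot {B} (hB : IsBLAdmissible Q B) :
      0 ≤ (∏ i, (B i).det ^ p i) / (BLmatrix C p 𝒬 B).det :=
    div_nonneg (hnum hB) (hM hB).det_pos.le
  have hval {B} (hB : IsBLAdmissible Q B) :
      (BLval C p 𝒬 B).toReal = √((∏ i, (B i).det ^ p i) / (BLmatrix C p 𝒬 B).det) :=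
    toReal_BLval (fun i => (hpos hB i).det_pos.le) (hM hB).det_pos.le
  rw [hval hA, hval hA', hval hAr, hval hHa, ← Real.sqrt_mul (hquot hA),
    ← Real.sqrt_mul (hquot hAr), div_mul_div_comm, div_mul_div_comm,
    prod_det_rpow_means_mul (hpos hA) (hpos hA')]
  exact Real.sqrt_le_sqrt <| div_le_div_of_nonneg_left (mul_nonneg (hnum hA) (hnum hA'))
    (mul_pos (hM hAr).det_pos (hM hHa).det_pos)
    (det_BLmatrix_means_mul_le hp h𝒬 (hpos hA) (hpos hA') (hM hA) (hM hA'))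

theorem gaussian_extremizers_closed_under_means_general (hp : ∀ i, 0 ≤ p i) (h𝒬 : 𝒬.PosSemidef)
    (hBL : BLconstQ C p Q 𝒬 < ⊤) (hA : IsBLAdmissible Q A) (hA' : IsBLAdmissible Q A')
    (hAmax : BLconstQ C p Q 𝒬 = BLval C p 𝒬 A) (hA'max : BLconstQ C p Q 𝒬 = BLval C p 𝒬 A') :
    (IsBLAdmissible Q (fun i => harmonicMean (A i) (A' i)) ∧
      BLconstQ C p Q 𝒬 = BLval C p 𝒬 fun i => harmonicMean (A i) (A' i)) ∧
    (IsBLAdmissible Q (fun i => arithmeticMean (A i) (A' i)) ∧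
      BLconstQ C p Q 𝒬 = BLval C p 𝒬 fun i => arithmeticMean (A i) (A' i)) := by
  have hAr := hA.arithmeticMean hA'
  have hHa := hA.harmonicMean hA'
  have hle {B} (hB : IsBLAdmissible Q B) :
      (BLval C p 𝒬 B).toReal ≤ (BLconstQ C p Q 𝒬).toReal :=
    ENNReal.toReal_mono hBL.ne hB.BLval_le_BLconstQ
  have hpos {B} (hB : IsBLAdmissible Q B) : 0 < (BLval C p 𝒬 B).toReal :=
    toReal_BLval_pos (fun i => (hB i).1) (hB.posDef_BLmatrix hp h𝒬 hBL)
  have hmul := toReal_BLval_mul_le_means hp h𝒬 hBL hA hA'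
  rw [← hAmax, ← hA'max] at hmul
  have heq := (mul_le_mul (hle hAr) (hle hHa) (hpos hHa).le ENNReal.toReal_nonneg).antisymm hmul
  obtain ⟨hArEq, hHaEq⟩ := (mul_eq_mul_iff_eq_and_eq_of_pos (hle hAr) (hle hHa) (hpos hAr)
    (hAmax ▸ hpos hA)).mp heq
  have hmax {B} (hB : IsBLAdmissible Q B)
      (h : (BLval C p 𝒬 B).toReal = (BLconstQ C p Q 𝒬).toReal) :
      BLconstQ C p Q 𝒬 = BLval C p 𝒬 B :=
    ((ENNReal.toReal_eq_toReal_iff' (hB.BLval_le_BLconstQ.trans_lt hBL).ne hBL.ne).mp h).symm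
  exact ⟨⟨hHa, hmax hHa hHaEq⟩, hAr, hmax hAr hArEq⟩

end BrascampLieb

/-- Gaussian extremizers are closed under the harmonic and the arithmetic mean. -/
theorem gaussian_extremizers_closed_under_means
    {n m : ℕ} (hm : 1 ≤ m) {ni : Fin m → ℕ}
    (C : ∀ i, Matrix (Fin (ni i)) (Fin n) ℝ)
    (hCsurj : ∀ i, Function.Surjective (C i).mulVec)
    (hker : ∀ x : Fin n → ℝ, (∀ i, (C i).mulVec x = 0) → x = 0)
    (p : Fin m → ℝ) (hp : ∀ i, 0 < p i)
    (Q : ∀ i, Matrix (Fin (ni i)) (Fin (ni i)) ℝ) (hQ : ∀ i, (Q i).PosDef)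
    (𝒬 : Matrix (Fin n) (Fin n) ℝ) (h𝒬 : 𝒬.PosSemidef)
    (hBL : BLconstQ C p Q 𝒬 < ⊤)
    (A A' : ∀ j, Matrix (Fin (ni j)) (Fin (ni j)) ℝ)
    (hA : ∀ j, (A j).PosDef ∧ (Q j - A j).PosSemidef)
    (hA' : ∀ j, (A' j).PosDef ∧ (Q j - A' j).PosSemidef)
    (hAmax : BLconstQ C p Q 𝒬 = BLval C p 𝒬 A)
    (hA'max : BLconstQ C p Q 𝒬 = BLval C p 𝒬 A') :
    ((∀ j, ((2 : ℝ) • ((A j)⁻¹ + (A' j)⁻¹)⁻¹).PosDef ∧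
        (Q j - (2 : ℝ) • ((A j)⁻¹ + (A' j)⁻¹)⁻¹).PosSemidef) ∧
      BLconstQ C p Q 𝒬 = BLval C p 𝒬 (fun j => (2 : ℝ) • ((A j)⁻¹ + (A' j)⁻¹)⁻¹)) ∧
    ((∀ j, (((2 : ℝ)⁻¹) • (A j + A' j)).PosDef ∧
        (Q j - ((2 : ℝ)⁻¹) • (A j + A' j)).PosSemidef) ∧
      BLconstQ C p Q 𝒬 = BLval C p 𝒬 (fun j => ((2 : ℝ)⁻¹) • (A j + A' j))) :=
  gaussian_extremizers_closed_under_means_general (fun i => (hp i).le) h𝒬 hBL hA hA' hAmax hA'max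
end
end

section
/- Let (C,p,Q) be a Brascamp–Lieb datum, let D : ℝⁿ → ℝⁿ and D_j : ℝ^{n_j} → ℝ^{n_j} (j = 1,…,m) be invertible linear maps, and set C'_j = D_j^{-1} C_j D and Q'_j = D_jᵀ Q_j D_j. Then BL(C',p,Q') = (∏_{j=1}^m |det D_j|^{p_j} / |det D|) · BL(C,p,Q). -/
open MeasureTheory Matrix
open scoped ENNReal

noncomputable section

/-- The regularized Brascamp–Lieb constant of a datum `(C, p, Q)`. -/
def BLconst {n m : ℕ} {ni : Fin m → ℕ} (C : ∀ i, Matrix (Fin (ni i)) (Fin n) ℝ)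
    (p : Fin m → ℝ) (Q : ∀ i, Matrix (Fin (ni i)) (Fin (ni i)) ℝ) : ℝ≥0∞ :=
  ⨆ (B : ∀ i, Matrix (Fin (ni i)) (Fin (ni i)) ℝ)
    (_ : ∀ i, (B i).PosDef ∧ (Q i - B i).PosSemidef),
    ((∏ i, ENNReal.ofReal ((B i).det) ^ p i) /
        ENNReal.ofReal ((∑ i, p i • ((C i)ᵀ * B i * C i)).det)) ^ ((2 : ℝ)⁻¹)

/-!
Replacing each `B j` by `(Dj j)ᵀ * B j * Dj j` carries the matrices `0 < B j ≤ Q j` bijectively onto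
those admissible for `(Dj j)ᵀ * Q j * Dj j`. The inverses in `(Dj j)⁻¹ * C j * D` cancel the new
outer factors, so the matrix in the denominator changes by the congruence `X ↦ Dᵀ * X * D`. Each
congruence multiplies a determinant by a square, and the square root in the constant turns these
squares into the factor `(∏ j, |det (Dj j)| ^ p j) / |det D|`, which does not depend on `B`.
-/

section Congruence

variable {R k l q : Type*} [CommRing R] [Fintype k] [DecidableEq k]

theorem det_transpose_mul_mul (M N : Matrix k k R) : (Mᵀ * N * M).det = M.det ^ 2 * N.det := by
  rw [det_mul, det_mul, det_transpose]
  ring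

theorem transpose_mul_mul_surjective {M : Matrix k k R} (hM : IsUnit M.det) :
    Function.Surjective fun N : Matrix k k R => Mᵀ * N * M := fun N =>
  ⟨(M⁻¹)ᵀ * N * M⁻¹, by
    calc Mᵀ * ((M⁻¹)ᵀ * N * M⁻¹) * M = (M⁻¹ * M)ᵀ * N * (M⁻¹ * M) := by
          simp only [transpose_mul, Matrix.mul_assoc]
      _ = N := by simp only [nonsing_inv_mul _ hM, transpose_one, Matrix.one_mul, Matrix.mul_one]⟩

theorem transpose_mul_mul_of_inv_mul_mul [Fintype l] {M : Matrix k k R} (hM : IsUnit M.det)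
    (A : Matrix k l R) (L : Matrix l q R) (N : Matrix k k R) :
    (M⁻¹ * A * L)ᵀ * (Mᵀ * N * M) * (M⁻¹ * A * L) = Lᵀ * (Aᵀ * N * A) * L := by
  calc (M⁻¹ * A * L)ᵀ * (Mᵀ * N * M) * (M⁻¹ * A * L)
      = Lᵀ * (Aᵀ * (M * M⁻¹)ᵀ * N * (M * M⁻¹) * A) * L := by
        simp only [transpose_mul, Matrix.mul_assoc]
    _ = Lᵀ * (Aᵀ * N * A) * L := by
        simp only [mul_nonsing_inv _ hM, transpose_one, Matrix.mul_one]

variable [PartialOrder R] [StarRing R] [TrivialStar R]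

theorem posDef_transpose_mul_mul_iff {M : Matrix k k R} (hM : IsUnit M.det) (N : Matrix k k R) :
    (Mᵀ * N * M).PosDef ↔ N.PosDef := by
  rw [← conjTranspose_eq_transpose_of_trivial, ← star_eq_conjTranspose]
  exact ((isUnit_iff_isUnit_det M).2 hM).posDef_star_left_conjugate_iff

theorem posSemidef_sub_transpose_mul_mul_iff {M : Matrix k k R} (hM : IsUnit M.det)
    (N P : Matrix k k R) : (Mᵀ * N * M - Mᵀ * P * M).PosSemidef ↔ (N - P).PosSemidef := by
  rw [← Matrix.sub_mul, ← Matrix.mul_sub, ← conjTranspose_eq_transpose_of_trivial,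
    ← star_eq_conjTranspose]
  exact ((isUnit_iff_isUnit_det M).2 hM).posSemidef_star_left_conjugate_iff

end Congruence

section Determinant

variable {k : Type*} [Fintype k] [DecidableEq k]

theorem ofReal_det_transpose_mul_mul (M N : Matrix k k ℝ) :
    ENNReal.ofReal (Mᵀ * N * M).det = ENNReal.ofReal |M.det| ^ 2 * ENNReal.ofReal N.det := by
  rw [det_transpose_mul_mul, ENNReal.ofReal_mul (sq_nonneg _), ← sq_abs,
    ENNReal.ofReal_pow (abs_nonneg _)]

theorem ofReal_det_transpose_mul_mul_rpow {M : Matrix k k ℝ} (hM : IsUnit M.det)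
    (N : Matrix k k ℝ) (r : ℝ) :
    ENNReal.ofReal (Mᵀ * N * M).det ^ r =
      ENNReal.ofReal (|M.det| ^ r) ^ 2 * ENNReal.ofReal N.det ^ r := by
  rw [ofReal_det_transpose_mul_mul,
    ENNReal.mul_rpow_of_ne_top (ENNReal.pow_ne_top ENNReal.ofReal_ne_top) ENNReal.ofReal_ne_top,
    ← ENNReal.ofReal_rpow_of_pos (abs_pos.2 hM.ne_zero), ← ENNReal.rpow_two, ← ENNReal.rpow_two,
    ← ENNReal.rpow_mul, ← ENNReal.rpow_mul, mul_comm 2 r]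

end Determinant

theorem sq_mul_div_sq_mul_rpow_inv_two {b : ℝ≥0∞} (hb : b ≠ 0) (hb' : b ≠ ∞) (a x y : ℝ≥0∞) :
    (a ^ 2 * x / (b ^ 2 * y)) ^ (2⁻¹ : ℝ) = a / b * (x / y) ^ (2⁻¹ : ℝ) := by
  rw [ENNReal.mul_div_mul_comm (.inl (pow_ne_zero 2 hb)) (.inl (ENNReal.pow_ne_top hb')),
    ENNReal.mul_rpow_of_nonneg _ _ (by positivity), ← ENNReal.rpow_two, ← ENNReal.rpow_two,
    ← ENNReal.div_rpow_of_nonneg _ _ zero_le_two, ENNReal.rpow_rpow_inv two_ne_zero]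

section Functional

variable {ι n : Type*} {κ : ι → Type*} [Fintype ι] [Fintype n] [DecidableEq n]
  [∀ i, Fintype (κ i)] [∀ i, DecidableEq (κ i)]

/-- The functional of `B` whose supremum over `0 < B i ≤ Q i` is the regularized Brascamp–Lieb
constant `BLconst C p Q`, for arbitrary finite index types. A vanishing or negative determinant in
the denominator counts as `0`, which makes the value `∞` when the `B i` are positive definite. -/
def BLfunctional (C : ∀ i, Matrix (κ i) n ℝ) (p : ι → ℝ) (B : ∀ i, Matrix (κ i) (κ i) ℝ) : ℝ≥0∞ :=
  ((∏ i, ENNReal.ofReal (B i).det ^ p i) /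
    ENNReal.ofReal (∑ i, p i • ((C i)ᵀ * B i * C i)).det) ^ (2⁻¹ : ℝ)

theorem BLfunctional_equivalent_data (C : ∀ i, Matrix (κ i) n ℝ) (p : ι → ℝ)
    {D : Matrix n n ℝ} (hD : IsUnit D.det)
    {E : ∀ i, Matrix (κ i) (κ i) ℝ} (hE : ∀ i, IsUnit (E i).det)
    (B : ∀ i, Matrix (κ i) (κ i) ℝ) :
    BLfunctional (fun i => (E i)⁻¹ * C i * D) p (fun i => (E i)ᵀ * B i * E i) =
      ENNReal.ofReal ((∏ i, |(E i).det| ^ p i) / |D.det|) * BLfunctional C p B := by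
  have hD_pos : 0 < |D.det| := abs_pos.2 hD.ne_zero
  have numerator : ∏ i, ENNReal.ofReal ((E i)ᵀ * B i * E i).det ^ p i =
      ENNReal.ofReal (∏ i, |(E i).det| ^ p i) ^ 2 * ∏ i, ENNReal.ofReal (B i).det ^ p i := by
    simp only [ofReal_det_transpose_mul_mul_rpow (hE _), Finset.prod_mul_distrib, Finset.prod_pow]
    rw [ENNReal.ofReal_prod_of_nonneg fun i _ => by positivity]
  have denominator : ENNReal.ofReal (∑ i, p i • (((E i)⁻¹ * C i * D)ᵀ *
        ((E i)ᵀ * B i * E i) * ((E i)⁻¹ * C i * D))).det =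
      ENNReal.ofReal |D.det| ^ 2 * ENNReal.ofReal (∑ i, p i • ((C i)ᵀ * B i * C i)).det := by
    rw [← ofReal_det_transpose_mul_mul]
    simp only [transpose_mul_mul_of_inv_mul_mul (hE _), Matrix.mul_sum, Matrix.sum_mul,
      Matrix.mul_smul, Matrix.smul_mul]
  rw [BLfunctional, numerator, denominator, sq_mul_div_sq_mul_rpow_inv_two
    (ENNReal.ofReal_pos.2 hD_pos).ne' ENNReal.ofReal_ne_top, ← ENNReal.ofReal_div_of_pos hD_pos,
    BLfunctional]

end Functional

theorem BLconst_eq_iSup_BLfunctional {n m : ℕ} {ni : Fin m → ℕ}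
    (C : ∀ i, Matrix (Fin (ni i)) (Fin n) ℝ) (p : Fin m → ℝ)
    (Q : ∀ i, Matrix (Fin (ni i)) (Fin (ni i)) ℝ) :
    BLconst C p Q = ⨆ (B : ∀ i, Matrix (Fin (ni i)) (Fin (ni i)) ℝ)
      (_ : ∀ i, (B i).PosDef ∧ (Q i - B i).PosSemidef), BLfunctional C p B :=
  rfl

theorem BLconst_equivalent_data_general {n m : ℕ} {ni : Fin m → ℕ}
    (C : ∀ j, Matrix (Fin (ni j)) (Fin n) ℝ) (p : Fin m → ℝ)
    (Q : ∀ j, Matrix (Fin (ni j)) (Fin (ni j)) ℝ)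
    (D : Matrix (Fin n) (Fin n) ℝ) (hD : IsUnit D.det)
    (Dj : ∀ j, Matrix (Fin (ni j)) (Fin (ni j)) ℝ) (hDj : ∀ j, IsUnit (Dj j).det) :
    BLconst (fun j => (Dj j)⁻¹ * C j * D) p (fun j => (Dj j)ᵀ * Q j * Dj j) =
      ENNReal.ofReal ((∏ j, |(Dj j).det| ^ p j) / |D.det|) * BLconst C p Q := by
  have congruence_surjective := Function.Surjective.piMap fun j =>
    transpose_mul_mul_surjective (hDj j)
  simp only [BLconst_eq_iSup_BLfunctional, ENNReal.mul_iSup]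
  refine (congruence_surjective.iSup_congr _ fun B => ?_).symm
  have admissible_iff : (∀ j, ((Dj j)ᵀ * B j * Dj j).PosDef ∧
        ((Dj j)ᵀ * Q j * Dj j - (Dj j)ᵀ * B j * Dj j).PosSemidef) ↔
      ∀ j, (B j).PosDef ∧ (Q j - B j).PosSemidef :=
    forall_congr' fun j => and_congr (posDef_transpose_mul_mul_iff (hDj j) _)
      (posSemidef_sub_transpose_mul_mul_iff (hDj j) _ _)
  exact iSup_congr_Prop admissible_iff fun _ => BLfunctional_equivalent_data C p hD hDj B

/-- The regularized Brascamp–Lieb constants of equivalent data are related by the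
determinants of the intertwining transformations. -/
theorem BLconst_equivalent_data
    {n m : ℕ} (hm : 1 ≤ m) {ni : Fin m → ℕ}
    (C : ∀ j, Matrix (Fin (ni j)) (Fin n) ℝ)
    (hCsurj : ∀ j, Function.Surjective (C j).mulVec)
    (hker : ∀ x : Fin n → ℝ, (∀ j, (C j).mulVec x = 0) → x = 0)
    (p : Fin m → ℝ) (hp : ∀ j, 0 < p j)
    (Q : ∀ j, Matrix (Fin (ni j)) (Fin (ni j)) ℝ) (hQ : ∀ j, (Q j).PosDef)
    (D : Matrix (Fin n) (Fin n) ℝ) (hD : IsUnit D.det)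
    (Dj : ∀ j, Matrix (Fin (ni j)) (Fin (ni j)) ℝ) (hDj : ∀ j, IsUnit (Dj j).det) :
    BLconst (fun j => (Dj j)⁻¹ * C j * D) p (fun j => (Dj j)ᵀ * Q j * Dj j) =
      ENNReal.ofReal ((∏ j, |(Dj j).det| ^ p j) / |D.det|) * BLconst C p Q :=
  BLconst_equivalent_data_general C p Q D hD Dj hDj
end
end
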